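/- Uniformity principle in dimension k ≥ 2: Fix a dimension k ≥ 2, a demand-to-supply ratio β > 0, and a constant M ≥ max{1, 1/β}. There exist a constant C > 0 depending only on β, M, and k and an integer N such that for all n ≥ N with m = βn, and for all service-range vectors r, r' ∈ [0, M]^n satisfying r ⪰ r' and ‖r^↓ − r'^↓‖₁ > θn for some θ > C·n^{−1/(4(k+1))}, the expected maximum matching sizes satisfy μ_m(r') > μ_m(r). -/

import Mathlib

open MeasureTheory
open scoped Classical

noncomputable section

/-- A matching of a bipartite compatibility relation, given as a finite set of
supply-demand pairs with compatible endpoints and pairwise distinct coordinates. -/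
def IsBipMatching {a b : ℕ} (adj : Fin a → Fin b → Prop) (M : Finset (Fin a × Fin b)) : Prop :=
  (∀ e ∈ M, adj e.1 e.2) ∧
    ∀ e ∈ M, ∀ e' ∈ M, e ≠ e' → e.1 ≠ e'.1 ∧ e.2 ≠ e'.2

/-- The maximum cardinality of a matching of the bipartite compatibility relation. -/
def matchingNumber {a b : ℕ} (adj : Fin a → Fin b → Prop) : ℕ :=
  sSup {c | ∃ M : Finset (Fin a × Fin b), IsBipMatching adj M ∧ M.card = c}

/-- The uniform measure on the unit cube `[0,1]^k`. -/
def unifCube (k : ℕ) : Measure (EuclideanSpace ℝ (Fin k)) :=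
  volume.restrict {x | ∀ i, x i ∈ Set.Icc (0 : ℝ) 1}

/-- Compatibility: supply node `i` can serve demand node `j` iff the demand location is
within distance `(r i / n)^(1/k)` of the supply location. -/
def adjOf (k ntot : ℕ) {a b : ℕ} (S : Fin a → EuclideanSpace ℝ (Fin k)) (r : Fin a → ℝ)
    (D : Fin b → EuclideanSpace ℝ (Fin k)) (i : Fin a) (j : Fin b) : Prop :=
  dist (S i) (D j) ≤ (r i / (ntot : ℝ)) ^ ((1 : ℝ) / (k : ℝ))

/-- Expected maximum matching size, with supply and demand locations i.i.d. uniform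
on the unit cube `[0,1]^k`. -/
def muU (k ntot m : ℕ) {a : ℕ} (r : Fin a → ℝ) : ℝ :=
  ∫ S : Fin a → EuclideanSpace ℝ (Fin k),
    ∫ D : Fin m → EuclideanSpace ℝ (Fin k),
      (matchingNumber (fun i j => adjOf k ntot S r D i j) : ℝ)
        ∂(Measure.pi fun _ => unifCube k) ∂(Measure.pi fun _ => unifCube k)

/-- The non-increasing rearrangement of a finite real vector. -/
def descSort {n : ℕ} (x : Fin n → ℝ) : Fin n → ℝ :=
  x ∘ Tuple.sort (fun i => -x i)

/-- `x` majorizes `y`. -/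
def Majorizes {n : ℕ} (x y : Fin n → ℝ) : Prop :=
  (∀ ℓ : ℕ,
      ∑ i ∈ Finset.univ.filter (fun i : Fin n => (i : ℕ) < ℓ), descSort y i ≤
        ∑ i ∈ Finset.univ.filter (fun i : Fin n => (i : ℕ) < ℓ), descSort x i) ∧
    ∑ i, x i = ∑ i, y i

/-!
A random hybrid argument reduces the claim to one coordinate. Resample both vectors with
replacement, `r ∘ I` and `r' ∘ I`, and exchange the coordinates one at a time. If `μ_m` is strongly
concave in each single range, majorization makes each exchange gain a multiple of `θ ^ 2`, a gain of
order `n θ ^ 2` in total. Since `μ_m` is symmetric and Lipschitz in each coordinate, resampling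
itself changes it by at most `O(√n)` in expectation, because the empirical counts of a sample
fluctuate by `√n`. The gain wins as soon as `θ` is a large multiple of `n ^ (-1/4)`.

For strong concavity, fix all nodes but one supply node. It adds `1` to the matching number exactly
when it reaches its nearest augmenting demand node. Averaging over its location, this probability is
the integral over a ball, whose volume is proportional to the range, of the density of the
displacement to that nearest node. Nearest-point cells are star-shaped, so the density decreases
along every ray. It decreases strictly: with probability at least proportional to the increment of
the range, a given demand node has exactly one other node nearby, a second demand node which takes
over as the nearest one when the supply node moves away from the first.
-/

open Function
open scoped BigOperators

/-! ### Matchings and augmenting demand nodes -/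

section Matching

variable {a b : ℕ} {adj adj' : Fin a → Fin b → Prop} {N N' : Finset (Fin a × Fin b)} {i : Fin a}
  {j : Fin b} {A B : Fin b → Prop}

lemma IsBipMatching.of_subset (hN : IsBipMatching adj N) (hsub : N' ⊆ N)
    (hadj : ∀ e ∈ N', adj' e.1 e.2) : IsBipMatching adj' N' :=
  ⟨hadj, fun e he e' he' => hN.2 e (hsub he) e' (hsub he')⟩

lemma IsBipMatching.eq_of_fst_eq (hN : IsBipMatching adj N) {e e' : Fin a × Fin b} (he : e ∈ N)
    (he' : e' ∈ N) (h : e.1 = e'.1) : e = e' :=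
  not_not.1 fun hne => (hN.2 e he e' he' hne).1 h

lemma IsBipMatching.of_update (hN : IsBipMatching (update adj i A) N) (hsub : N' ⊆ N)
    (hB : ∀ e ∈ N', e.1 = i → B e.2) : IsBipMatching (update adj i B) N' := by
  refine hN.of_subset hsub fun e he => ?_
  by_cases hi : e.1 = i
  · simpa only [hi, update_self] using hB e he hi
  · simpa only [update_of_ne hi] using hN.1 e (hsub he)

lemma IsBipMatching.insert {e : Fin a × Fin b} (hN : IsBipMatching adj N) (hadj : adj e.1 e.2)
    (hfst : ∀ e' ∈ N, e'.1 ≠ e.1) (hsnd : ∀ e' ∈ N, e'.2 ≠ e.2) :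
    IsBipMatching adj (insert e N) := by
  refine ⟨Finset.forall_mem_insert _ _ _ |>.2 ⟨hadj, hN.1⟩, fun e₁ h₁ e₂ h₂ hne => ?_⟩
  rcases Finset.mem_insert.1 h₁ with rfl | hN₁ <;> rcases Finset.mem_insert.1 h₂ with rfl | hN₂
  · exact absurd rfl hne
  · exact ⟨(hfst e₂ hN₂).symm, (hsnd e₂ hN₂).symm⟩
  · exact ⟨hfst e₁ hN₁, hsnd e₁ hN₁⟩
  · exact hN.2 e₁ hN₁ e₂ hN₂ hne

lemma bddAbove_card_isBipMatching (adj : Fin a → Fin b → Prop) :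
    BddAbove {c | ∃ N : Finset (Fin a × Fin b), IsBipMatching adj N ∧ N.card = c} := by
  refine ⟨Fintype.card (Fin a × Fin b), ?_⟩
  rintro c ⟨N, -, rfl⟩
  exact N.card_le_univ

lemma exists_isBipMatching_card_eq (adj : Fin a → Fin b → Prop) :
    ∃ N : Finset (Fin a × Fin b), IsBipMatching adj N ∧ N.card = matchingNumber adj :=
  Nat.sSup_mem (s := {c | ∃ N : Finset (Fin a × Fin b), IsBipMatching adj N ∧ N.card = c})
    ⟨0, ∅, by simp [IsBipMatching], Finset.card_empty⟩ (bddAbove_card_isBipMatching adj)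

lemma IsBipMatching.card_le_matchingNumber (hN : IsBipMatching adj N) :
    N.card ≤ matchingNumber adj :=
  le_csSup (bddAbove_card_isBipMatching adj) ⟨N, hN, rfl⟩

lemma matchingNumber_mono (h : adj ≤ adj') : matchingNumber adj ≤ matchingNumber adj' := by
  obtain ⟨N, hN, hcard⟩ := exists_isBipMatching_card_eq adj
  rw [← hcard]
  exact (hN.of_subset subset_rfl fun e he => h _ _ (hN.1 e he)).card_le_matchingNumber

lemma matchingNumber_le_matchingNumber_comp_perm (adj : Fin a → Fin b → Prop)
    (σ : Equiv.Perm (Fin a)) : matchingNumber adj ≤ matchingNumber (adj ∘ σ) := by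
  obtain ⟨N, hN, hcard⟩ := exists_isBipMatching_card_eq adj
  let f : Fin a × Fin b ↪ Fin a × Fin b := (σ.symm.prodCongr (Equiv.refl _)).toEmbedding
  have hmap : IsBipMatching (adj ∘ σ) (N.map f) := by
    simp only [IsBipMatching, Finset.forall_mem_map]
    refine ⟨fun e he => by simpa [f] using hN.1 e he, fun e he e' he' hne => ?_⟩
    simpa [f] using hN.2 e he e' he' fun h => hne (h ▸ rfl)
  rw [← hcard, ← N.card_map f]
  exact hmap.card_le_matchingNumber

lemma matchingNumber_comp_perm (adj : Fin a → Fin b → Prop) (σ : Equiv.Perm (Fin a)) :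
    matchingNumber (adj ∘ σ) = matchingNumber adj := by
  refine le_antisymm ?_ (matchingNumber_le_matchingNumber_comp_perm adj σ)
  simpa [comp_assoc] using matchingNumber_le_matchingNumber_comp_perm (adj ∘ σ) σ.symm

/-- The demand nodes `j` whose service by the supply node `i`, stripped of all its own edges,
would enlarge the maximum matching. -/
def augmenting (adj : Fin a → Fin b → Prop) (i : Fin a) : Set (Fin b) :=
  {j | matchingNumber (update adj i ⊥) < matchingNumber (update adj i (· = j))}

lemma matchingNumber_update_mono (adj : Fin a → Fin b → Prop) (i : Fin a) (h : A ≤ B) :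
    matchingNumber (update adj i A) ≤ matchingNumber (update adj i B) :=
  matchingNumber_mono (update_le_update_iff.2 ⟨h, fun _ _ => le_rfl⟩)

lemma matchingNumber_update_le_succ (adj : Fin a → Fin b → Prop) (i : Fin a) (A : Fin b → Prop) :
    matchingNumber (update adj i A) ≤ matchingNumber (update adj i ⊥) + 1 := by
  obtain ⟨N, hN, hcard⟩ := exists_isBipMatching_card_eq (update adj i A)
  have hrest : IsBipMatching (update adj i ⊥) (N.filter (·.1 ≠ i)) :=
    hN.of_update (N.filter_subset _) fun e he hei => (Finset.mem_filter.1 he).2 hei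
  have hrow : (N.filter (¬ ·.1 ≠ i)).card ≤ 1 := by
    refine Finset.card_le_one.2 fun e he e' he' => ?_
    simp only [Finset.mem_filter, not_not] at he he'
    exact hN.eq_of_fst_eq he.1 he'.1 (he.2.trans he'.2.symm)
  rw [← hcard, ← Finset.card_filter_add_card_filter_not (s := N) (·.1 ≠ i)]
  exact add_le_add hrest.card_le_matchingNumber hrow

lemma exists_mem_augmenting_of_lt
    (h : matchingNumber (update adj i ⊥) < matchingNumber (update adj i A)) :
    ∃ j ∈ augmenting adj i, A j := by
  obtain ⟨N, hN, hcard⟩ := exists_isBipMatching_card_eq (update adj i A)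
  obtain ⟨e, he, rfl⟩ : ∃ e ∈ N, e.1 = i := by
    by_contra! hno
    have := (hN.of_update (B := ⊥) subset_rfl
      fun e he hei => (hno e he hei).elim).card_le_matchingNumber
    omega
  refine ⟨e.2, h.trans_le ?_, by simpa only [update_self] using hN.1 e he⟩
  have hN' : IsBipMatching (update adj e.1 (· = e.2)) N :=
    hN.of_update subset_rfl fun e' he' h => congr_arg Prod.snd (hN.eq_of_fst_eq he' he h)
  exact hcard ▸ hN'.card_le_matchingNumber

lemma matchingNumber_update (adj : Fin a → Fin b → Prop) (i : Fin a) (A : Fin b → Prop) :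
    matchingNumber (update adj i A) =
      matchingNumber (update adj i ⊥) + if ∃ j ∈ augmenting adj i, A j then 1 else 0 := by
  split_ifs with h
  · obtain ⟨j, hj, hA⟩ := h
    have hle : matchingNumber (update adj i (· = j)) ≤ matchingNumber (update adj i A) :=
      matchingNumber_update_mono adj i fun _ h => h ▸ hA
    exact (matchingNumber_update_le_succ adj i A).antisymm (Nat.succ_le_of_lt (hj.trans_le hle))
  · exact (not_lt.1 fun hlt => h (exists_mem_augmenting_of_lt hlt)).antisymm
      (matchingNumber_update_mono adj i bot_le)

lemma mem_augmenting_of_isolated (h : ∀ i' ≠ i, ¬ adj i' j) : j ∈ augmenting adj i := by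
  obtain ⟨N, hN, hcard⟩ := exists_isBipMatching_card_eq (update adj i ⊥)
  have hfst : ∀ e ∈ N, e.1 ≠ i := fun e he hei => by simpa [hei] using hN.1 e he
  have hsnd : ∀ e ∈ N, e.2 ≠ j := fun e he hej => by
    simpa [update_of_ne (hfst e he), hej, h _ (hfst e he)] using hN.1 e he
  have hins : IsBipMatching (update adj i (· = j)) (insert (i, j) N) :=
    (hN.of_update subset_rfl fun e he hei => (hfst e he hei).elim).insert (by simp) hfst hsnd
  have hcard_ins := hins.card_le_matchingNumber
  rw [Finset.card_insert_of_notMem fun hmem => hfst _ hmem rfl, hcard] at hcard_ins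
  exact hcard_ins

end Matching

/-! ### Majorization and strongly concave functions -/

section Majorization

variable {n : ℕ} {x y : Fin n → ℝ}

lemma antitone_descSort (x : Fin n → ℝ) : Antitone (descSort x) :=
  fun _ _ hij => neg_le_neg_iff.1 (Tuple.monotone_sort (fun i => -x i) hij)

lemma sum_comp_descSort (φ : ℝ → ℝ) (x : Fin n → ℝ) : ∑ i, φ (descSort x i) = ∑ i, φ (x i) :=
  Equiv.sum_comp (Tuple.sort fun i => -x i) fun i => φ (x i)

lemma sum_mul_le_mul_sum_of_monotone {γ d : Fin n → ℝ} {Γ : ℝ} (hγ : Monotone γ)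
    (hΓ : ∀ i, γ i ≤ Γ) (hd : ∀ ℓ : ℕ, 0 ≤ ∑ i with (i : Fin n).val < ℓ, d i) :
    ∑ i, γ i * d i ≤ Γ * ∑ i, d i := by
  induction n generalizing Γ with
  | zero => simp
  | succ n ih =>
    have hinit : ∀ ℓ : ℕ, 0 ≤ ∑ i with (i : Fin n).val < ℓ, d i.castSucc := fun ℓ => by
      simpa [Finset.sum_filter, Fin.sum_univ_castSucc] using hd (min ℓ n)
    have htotal : 0 ≤ ∑ i, d i := by
      simpa only [Finset.filter_true_of_mem fun (i : Fin (n + 1)) _ => i.isLt] using hd (n + 1)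
    calc ∑ i, γ i * d i
        ≤ γ (Fin.last n) * ∑ i : Fin n, d i.castSucc + γ (Fin.last n) * d (Fin.last n) := by
          rw [Fin.sum_univ_castSucc]
          gcongr
          exact ih (hγ.comp Fin.strictMono_castSucc.monotone) (fun i => hγ (Fin.le_last _)) hinit
      _ = γ (Fin.last n) * ∑ i, d i := by rw [Fin.sum_univ_castSucc d, mul_add]
      _ ≤ Γ * ∑ i, d i := by gcongr; exact hΓ _

lemma Majorizes.sum_mul_descSort_sub_nonpos (h : Majorizes x y) {γ : Fin n → ℝ}
    (hγ : Monotone γ) : ∑ i, γ i * (descSort x i - descSort y i) ≤ 0 := by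
  obtain ⟨Γ, hΓ⟩ := (Set.finite_range γ).bddAbove
  have hpartial : ∀ ℓ : ℕ, 0 ≤ ∑ i with (i : Fin n).val < ℓ, (descSort x i - descSort y i) :=
    fun ℓ => by simpa only [Finset.sum_sub_distrib, sub_nonneg] using h.1 ℓ
  have htotal : ∑ i, (descSort x i - descSort y i) = 0 := by
    rw [Finset.sum_sub_distrib, sub_eq_zero]
    exact (sum_comp_descSort id x).trans (h.2.trans (sum_comp_descSort id y).symm)
  simpa [htotal] using
    sum_mul_le_mul_sum_of_monotone hγ (fun i => hΓ (Set.mem_range_self i)) hpartial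

/-- `g a` is, for every `a ∈ s`, the slope of a parabola of curvature `-2c` which touches `φ` at
`a` and dominates it on `s`. This quantifies strong concavity of `φ` on `s`, endpoints included. -/
def HasStrongSupergradientOn (φ g : ℝ → ℝ) (c : ℝ) (s : Set ℝ) : Prop :=
  ∀ a ∈ s, ∀ b ∈ s, φ b ≤ φ a + g a * (b - a) - c * (b - a) ^ 2

namespace HasStrongSupergradientOn

variable {φ g : ℝ → ℝ} {c : ℝ} {s : Set ℝ}

lemma antitoneOn (h : HasStrongSupergradientOn φ g c s) (hc : 0 ≤ c) : AntitoneOn g s := by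
  intro a ha b hb hab
  rcases hab.eq_or_lt with rfl | hlt
  · rfl
  · have hcurv : 0 ≤ c * (b - a) ^ 2 := by positivity
    have hprod : 0 ≤ (g a - g b) * (b - a) := by linarith [h a ha b hb, h b hb a ha]
    exact sub_nonneg.1 (nonneg_of_mul_nonneg_left hprod (sub_pos.2 hlt))

lemma mul_sum_sq_descSort_sub_le (h : HasStrongSupergradientOn φ g c s) (hc : 0 ≤ c)
    (hmaj : Majorizes x y) (hx : ∀ i, x i ∈ s) (hy : ∀ i, y i ∈ s) :
    c * ∑ i, (descSort x i - descSort y i) ^ 2 ≤ ∑ i, (φ (y i) - φ (x i)) := by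
  have hlinear : ∑ i, g (descSort y i) * (descSort x i - descSort y i) ≤ 0 :=
    hmaj.sum_mul_descSort_sub_nonpos fun i j hij =>
      h.antitoneOn hc (hy _) (hy _) (antitone_descSort y hij)
  have hparabola : ∑ i, φ (descSort x i) ≤ ∑ i, (φ (descSort y i) +
      g (descSort y i) * (descSort x i - descSort y i) - c * (descSort x i - descSort y i) ^ 2) :=
    Finset.sum_le_sum fun i _ => h _ (hy _) _ (hx _)
  rw [Finset.sum_sub_distrib, Finset.sum_add_distrib, ← Finset.mul_sum] at hparabola
  rw [Finset.sum_sub_distrib, ← sum_comp_descSort φ x, ← sum_comp_descSort φ y]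
  linarith

lemma mul_sq_le_expect_sub [NeZero n] (h : HasStrongSupergradientOn φ g c s) (hc : 0 ≤ c)
    (hmaj : Majorizes x y) (hx : ∀ i, x i ∈ s) (hy : ∀ i, y i ∈ s) {θ : ℝ} (hθ : 0 ≤ θ)
    (hgap : θ ≤ 𝔼 i, |descSort x i - descSort y i|) :
    c * θ ^ 2 ≤ 𝔼 i, (φ (y i) - φ (x i)) := by
  have hcauchy : (𝔼 i, |descSort x i - descSort y i|) ^ 2 ≤
      𝔼 i, (descSort x i - descSort y i) ^ 2 := by
    simpa [sq_abs] using Finset.univ.expect_mul_sq_le_sq_mul_sq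
      (fun i => |descSort x i - descSort y i|) fun _ => (1 : ℝ)
  calc c * θ ^ 2 ≤ c * 𝔼 i, (descSort x i - descSort y i) ^ 2 := by
        gcongr
        exact (pow_le_pow_left₀ hθ hgap 2).trans hcauchy
    _ ≤ 𝔼 i, (φ (y i) - φ (x i)) := by
        rw [Fintype.expect_eq_sum_div_card, Fintype.expect_eq_sum_div_card, ← mul_div_assoc]
        gcongr
        exact h.mul_sum_sq_descSort_sub_le hc hmaj hx hy

end HasStrongSupergradientOn

end Majorization

/-! ### Sampling with replacement -/

section Sampling

variable {ι κ : Type*} [Fintype ι] [DecidableEq ι] [Fintype κ] [Nonempty κ]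

lemma expect_expect_update (i : ι) (f : (ι → κ) → ℝ) :
    𝔼 I, 𝔼 l, f (update I i l) = 𝔼 I, f I := by
  let swap : (ι → κ) × κ → (ι → κ) × κ := fun p => (update p.1 i p.2, p.1 i)
  have hswap : Involutive swap := fun p => by simp [swap]
  calc 𝔼 I, 𝔼 l, f (update I i l) = 𝔼 p : (ι → κ) × κ, f (swap p).1 := by
        rw [← Finset.univ_product_univ, Finset.expect_product]
    _ = 𝔼 p : (ι → κ) × κ, f p.1 := Fintype.expect_equiv hswap.toPerm _ _ fun _ => rfl
    _ = 𝔼 I, f I := by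
        simp only [← Finset.univ_product_univ, Finset.expect_product, Fintype.expect_const]

variable {e : κ → ℝ}

lemma expect_mul_apply_apply_eq_zero (he : 𝔼 l, e l = 0) {i j : ι} (hij : i ≠ j) :
    𝔼 I : ι → κ, e (I i) * e (I j) = 0 := by
  rw [← expect_expect_update i]
  simp [update_of_ne hij.symm, ← Finset.expect_mul, he]

lemma expect_sq_sum_apply_le (he : 𝔼 l, e l = 0) (hbd : ∀ l, |e l| ≤ 1) :
    𝔼 I : ι → κ, (∑ i, e (I i)) ^ 2 ≤ Fintype.card ι := by
  have hcov (i j : ι) : 𝔼 I : ι → κ, e (I i) * e (I j) ≤ if i = j then 1 else 0 := by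
    split_ifs with hij
    · subst hij
      refine Finset.expect_le Finset.univ_nonempty fun I _ => ?_
      rw [← abs_mul_abs_self]
      exact mul_le_one₀ (hbd _) (abs_nonneg _) (hbd _)
    · exact (expect_mul_apply_apply_eq_zero he hij).le
  calc 𝔼 I : ι → κ, (∑ i, e (I i)) ^ 2 = ∑ i, ∑ j, 𝔼 I : ι → κ, e (I i) * e (I j) := by
        simp only [sq, Finset.sum_mul_sum, Finset.expect_sum_comm]
    _ ≤ ∑ i : ι, ∑ j : ι, if i = j then (1 : ℝ) else 0 := by gcongr; exact hcov _ _
    _ = Fintype.card ι := by simp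

lemma expect_abs_sum_apply_le (he : 𝔼 l, e l = 0) (hbd : ∀ l, |e l| ≤ 1) :
    𝔼 I : ι → κ, |∑ i, e (I i)| ≤ √(Fintype.card ι) := by
  refine Real.le_sqrt_of_sq_le (le_trans ?_ (expect_sq_sum_apply_le he hbd))
  simpa [sq_abs] using Finset.univ.expect_mul_sq_le_sq_mul_sq
    (fun I : ι → κ => |∑ i, e (I i)|) fun _ => (1 : ℝ)

lemma expect_abs_sum_apply_sub_le {f : κ → ℝ} (hf : ∀ l, f l ∈ Set.Icc 0 1) :
    𝔼 I : ι → κ, |∑ i, f (I i) - Fintype.card ι * 𝔼 l, f l| ≤ √(Fintype.card ι) := by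
  have hmean : 𝔼 l, f l ∈ Set.Icc (0 : ℝ) 1 :=
    ⟨Finset.le_expect Finset.univ_nonempty fun l _ => (hf l).1,
      Finset.expect_le Finset.univ_nonempty fun l _ => (hf l).2⟩
  have hcenter : 𝔼 l, (f l - 𝔼 l, f l) = 0 := by
    rw [Finset.expect_sub_distrib, Fintype.expect_const, sub_self]
  simpa using expect_abs_sum_apply_le (ι := ι) hcenter fun l =>
    abs_sub_le_of_nonneg_of_le (hf l).1 (hf l).2 hmean.1 hmean.2

end Sampling

section LayerCake

lemma indicator_one_le_indicator_one {α β : Type*} {s : Set α} {t : Set β} {u : α} {v : β}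
    (h : u ∈ s → v ∈ t) : s.indicator (1 : α → ℝ) u ≤ t.indicator 1 v := by
  by_cases hu : u ∈ s
  · simp [hu, h hu]
  · rw [Set.indicator_of_notMem hu]
    exact Set.indicator_apply_nonneg fun _ => zero_le_one

variable {ι : Type*} [Fintype ι]

/-- The number of coordinates of `x` that are at least `t`, as a real number. -/
def countGE (x : ι → ℝ) (t : ℝ) : ℝ := ∑ i, (Set.Iic (x i)).indicator 1 t

lemma antitone_indicator_Iic (a : ℝ) : Antitone ((Set.Iic a).indicator (1 : ℝ → ℝ)) :=
  fun _ _ hst => indicator_one_le_indicator_one hst.trans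

lemma intervalIntegrable_indicator_Iic (c a b : ℝ) :
    IntervalIntegrable ((Set.Iic c).indicator (1 : ℝ → ℝ)) volume a b :=
  (antitone_indicator_Iic c).intervalIntegrable

lemma intervalIntegrable_abs_countGE_sub (x y : ι → ℝ) (a b : ℝ) :
    IntervalIntegrable (fun t => |countGE x t - countGE y t|) volume a b := by
  have hcount (z : ι → ℝ) : IntervalIntegrable (countGE z) volume a b :=
    Antitone.intervalIntegrable fun _ _ hst =>
      Finset.sum_le_sum fun i _ => antitone_indicator_Iic (z i) hst
  exact ((hcount x).sub (hcount y)).abs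

lemma abs_sub_le_integral_abs_indicator_sub {x y R : ℝ} (hx : x ∈ Set.Icc 0 R)
    (hy : y ∈ Set.Icc 0 R) :
    |x - y| ≤ ∫ t in 0..R, |(Set.Iic x).indicator 1 t - (Set.Iic y).indicator (1 : ℝ → ℝ) t| := by
  have hlength {z : ℝ} (hz : z ∈ Set.Icc 0 R) :
      ∫ t in 0..R, (Set.Iic z).indicator (1 : ℝ → ℝ) t = z :=
    (intervalIntegral.integral_indicator hz).trans (by simp)
  calc |x - y| = |∫ t in 0..R,
        ((Set.Iic x).indicator 1 t - (Set.Iic y).indicator (1 : ℝ → ℝ) t)| := by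
        rw [intervalIntegral.integral_sub (intervalIntegrable_indicator_Iic _ _ _)
          (intervalIntegrable_indicator_Iic _ _ _), hlength hx, hlength hy]
    _ ≤ _ := intervalIntegral.abs_integral_le_integral_abs (hx.1.trans hx.2)

variable [LinearOrder ι] {x y : ι → ℝ}

lemma sum_abs_indicator_sub_eq_abs_countGE_sub (hx : Antitone x) (hy : Antitone y) (t : ℝ) :
    ∑ i, |(Set.Iic (x i)).indicator 1 t - (Set.Iic (y i)).indicator (1 : ℝ → ℝ) t| =
      |countGE x t - countGE y t| := by
  have hlower {z : ι → ℝ} (hz : Antitone z) : IsLowerSet {i | t ≤ z i} :=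
    fun i j hji hi => le_trans hi (hz hji)
  have hmono {z w : ι → ℝ} (h : {i | t ≤ z i} ⊆ {i | t ≤ w i}) (i : ι) :
      (Set.Iic (z i)).indicator (1 : ℝ → ℝ) t ≤ (Set.Iic (w i)).indicator 1 t :=
    indicator_one_le_indicator_one (@h i)
  rw [countGE, countGE, ← Finset.sum_sub_distrib]
  rcases (hlower hx).total (hlower hy) with h | h
  · simp only [abs_of_nonpos (sub_nonpos.2 (hmono h _)), Finset.sum_neg_distrib,
      abs_of_nonpos (Finset.sum_nonpos fun i _ => sub_nonpos.2 (hmono h i))]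
  · simp only [abs_of_nonneg (sub_nonneg.2 (hmono h _)),
      abs_of_nonneg (Finset.sum_nonneg fun i _ => sub_nonneg.2 (hmono h i))]

lemma sum_abs_sub_le_integral_abs_countGE_sub {R : ℝ} (hx : Antitone x) (hy : Antitone y)
    (hxR : ∀ i, x i ∈ Set.Icc 0 R) (hyR : ∀ i, y i ∈ Set.Icc 0 R) :
    ∑ i, |x i - y i| ≤ ∫ t in 0..R, |countGE x t - countGE y t| :=
  calc ∑ i, |x i - y i| ≤ ∑ i, ∫ t in 0..R,
        |(Set.Iic (x i)).indicator 1 t - (Set.Iic (y i)).indicator (1 : ℝ → ℝ) t| :=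
        Finset.sum_le_sum fun i _ => abs_sub_le_integral_abs_indicator_sub (hxR i) (hyR i)
    _ = ∫ t in 0..R, |countGE x t - countGE y t| := by
        rw [← intervalIntegral.integral_finsetSum fun i _ => IntervalIntegrable.abs <|
          (intervalIntegrable_indicator_Iic _ _ _).sub (intervalIntegrable_indicator_Iic _ _ _)]
        simp only [sum_abs_indicator_sub_eq_abs_countGE_sub hx hy]

end LayerCake

section Hybrid

variable {ι κ : Type*} [Fintype ι] [DecidableEq ι] [Fintype κ]

/-- `μ` is `L`-Lipschitz in each coordinate separately, while all coordinates stay in `s`. -/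
def CoordLipschitzOn (μ : (ι → ℝ) → ℝ) (L : ℝ) (s : Set ℝ) : Prop :=
  ∀ x : ι → ℝ, (∀ i, x i ∈ s) → ∀ i, ∀ a ∈ s, |μ (update x i a) - μ x| ≤ L * |a - x i|

lemma piecewise_apply_mem {ι : Type*} [DecidableEq ι] {s : Set ℝ} {x y : ι → ℝ}
    (hx : ∀ i, x i ∈ s) (hy : ∀ i, y i ∈ s) (T : Finset ι) (i : ι) : T.piecewise x y i ∈ s :=
  T.piecewise_cases x y (· ∈ s) (hx i) (hy i)

lemma CoordLipschitzOn.abs_sub_le_mul_sum {μ : (ι → ℝ) → ℝ} {L : ℝ} {s : Set ℝ}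
    (h : CoordLipschitzOn μ L s) {x y : ι → ℝ} (hx : ∀ i, x i ∈ s) (hy : ∀ i, y i ∈ s) :
    |μ x - μ y| ≤ L * ∑ i, |x i - y i| := by
  suffices ∀ T : Finset ι, |μ (T.piecewise x y) - μ y| ≤ L * ∑ i ∈ T, |x i - y i| by
    simpa using this Finset.univ
  intro T
  induction T using Finset.induction_on with
  | empty => simp
  | insert i T hi ih =>
    rw [Finset.piecewise_insert, Finset.sum_insert hi, mul_add]
    have hstep := h _ (piecewise_apply_mem hx hy T) i (x i) (hx i)
    rw [Finset.piecewise_eq_of_notMem _ _ _ hi] at hstep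
    exact (abs_sub_le _ (μ (T.piecewise x y)) _).trans (add_le_add hstep ih)

lemma piecewise_comp_update {ι κ : Type*} [DecidableEq ι] {T : Finset ι} {i : ι} (hi : i ∉ T)
    (f g : κ → ℝ) (I : ι → κ) (l : κ) :
    T.piecewise (f ∘ update I i l) (g ∘ update I i l) =
      update (T.piecewise (f ∘ I) (g ∘ I)) i (g l) := by
  rw [T.update_piecewise_of_notMem _ _ hi, comp_update, comp_update]
  exact T.piecewise_congr (fun j hj => update_of_ne (ne_of_mem_of_not_mem hj hi) ..)
    fun _ _ => rfl

lemma card_mul_le_expect_comp_sub [Nonempty κ] {μ : (ι → ℝ) → ℝ} {s : Set ℝ} {r r' : κ → ℝ} {δ : ℝ}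
    (hr : ∀ l, r l ∈ s) (hr' : ∀ l, r' l ∈ s)
    (h : ∀ x : ι → ℝ, (∀ i, x i ∈ s) → ∀ i,
      δ ≤ 𝔼 l, (μ (update x i (r' l)) - μ (update x i (r l)))) :
    Fintype.card ι * δ ≤ 𝔼 I : ι → κ, μ (r' ∘ I) - 𝔼 I : ι → κ, μ (r ∘ I) := by
  suffices ∀ T : Finset ι, T.card * δ ≤
      𝔼 I : ι → κ, μ (T.piecewise (r' ∘ I) (r ∘ I)) - 𝔼 I : ι → κ, μ (r ∘ I) by
    simpa using this Finset.univ
  intro T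
  induction T using Finset.induction_on with
  | empty => simp
  | insert i T hi ih =>
    have hstep : δ ≤ 𝔼 I : ι → κ, (μ ((insert i T).piecewise (r' ∘ I) (r ∘ I)) -
        μ (T.piecewise (r' ∘ I) (r ∘ I))) := by
      rw [← expect_expect_update i]
      refine Finset.le_expect Finset.univ_nonempty fun I _ => ?_
      simpa only [Finset.piecewise_insert, piecewise_comp_update hi, comp_apply, update_self,
        update_idem] using
          h _ (piecewise_apply_mem (x := r' ∘ I) (y := r ∘ I) (fun _ => hr' _) (fun _ => hr _) T) i
    rw [Finset.expect_sub_distrib] at hstep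
    rw [Finset.card_insert_of_notMem hi]
    push_cast
    linarith

lemma expect_abs_countGE_comp_sub_le [Nonempty ι] (r : ι → ℝ) (t : ℝ) :
    𝔼 I : ι → ι, |countGE (r ∘ I) t - countGE r t| ≤ √(Fintype.card ι) := by
  have h := expect_abs_sum_apply_sub_le (ι := ι)
    (f := fun i => (Set.Iic (r i)).indicator 1 t) fun i => by
      by_cases hi : t ≤ r i <;> simp [hi]
  rwa [Fintype.card_mul_expect] at h

end Hybrid

section SymmetricFunction

variable {n : ℕ} {μ : (Fin n → ℝ) → ℝ} {L R : ℝ}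

lemma abs_comp_sub_le_mul_integral (hL : 0 ≤ L)
    (hsymm : ∀ x (σ : Equiv.Perm (Fin n)), μ (x ∘ σ) = μ x)
    (hlip : CoordLipschitzOn μ L (Set.Icc 0 R)) {x y : Fin n → ℝ}
    (hx : ∀ i, x i ∈ Set.Icc 0 R) (hy : ∀ i, y i ∈ Set.Icc 0 R) :
    |μ x - μ y| ≤ L * ∫ t in 0..R, |countGE x t - countGE y t| := by
  have hsort (z : Fin n → ℝ) : μ (descSort z) = μ z := hsymm _ _
  have hcount (z : Fin n → ℝ) : countGE (descSort z) = countGE z :=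
    funext fun t => sum_comp_descSort (fun s => (Set.Iic s).indicator 1 t) z
  rw [← hsort x, ← hsort y, ← hcount x, ← hcount y]
  refine (hlip.abs_sub_le_mul_sum (fun _ => hx _) (fun _ => hy _)).trans ?_
  gcongr
  exact sum_abs_sub_le_integral_abs_countGE_sub (antitone_descSort x) (antitone_descSort y)
    (fun _ => hx _) (fun _ => hy _)

variable [NeZero n]

lemma abs_expect_comp_sub_le (hL : 0 ≤ L) (hR : 0 ≤ R)
    (hsymm : ∀ x (σ : Equiv.Perm (Fin n)), μ (x ∘ σ) = μ x)
    (hlip : CoordLipschitzOn μ L (Set.Icc 0 R)) {r : Fin n → ℝ} (hr : ∀ i, r i ∈ Set.Icc 0 R) :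
    |𝔼 I : Fin n → Fin n, μ (r ∘ I) - μ r| ≤ L * (R * √n) := by
  have hInt (I : Fin n → Fin n) := intervalIntegrable_abs_countGE_sub (r ∘ I) r 0 R
  calc |𝔼 I : Fin n → Fin n, μ (r ∘ I) - μ r|
      = |𝔼 I : Fin n → Fin n, (μ (r ∘ I) - μ r)| := by
        rw [Finset.expect_sub_distrib, Fintype.expect_const]
    _ ≤ 𝔼 I : Fin n → Fin n, |μ (r ∘ I) - μ r| := Finset.abs_expect_le _ _
    _ ≤ 𝔼 I : Fin n → Fin n, L * ∫ t in 0..R, |countGE (r ∘ I) t - countGE r t| :=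
        Finset.expect_le_expect fun I _ =>
          abs_comp_sub_le_mul_integral hL hsymm hlip (fun _ => hr _) hr
    _ = L * ∫ t in 0..R, 𝔼 I : Fin n → Fin n, |countGE (r ∘ I) t - countGE r t| := by
        simp only [← Finset.mul_expect, Fintype.expect_eq_sum_div_card,
          intervalIntegral.integral_div, intervalIntegral.integral_finsetSum fun I _ => hInt I]
    _ ≤ L * ∫ _ in 0..R, √n := by
        refine mul_le_mul_of_nonneg_left (intervalIntegral.integral_mono_on hR ?_ (by simp)
          fun t _ => ?_) hL
        · simpa only [Fintype.expect_eq_sum_div_card, Finset.sum_fn] using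
            (IntervalIntegrable.sum Finset.univ fun I _ => hInt I).div_const _
        · simpa using expect_abs_countGE_comp_sub_le r t
    _ = L * (R * √n) := by simp

theorem mul_sub_le_sub_of_majorizes {c θ : ℝ} (hL : 0 ≤ L) (hR : 0 ≤ R) (hc : 0 ≤ c) (hθ : 0 ≤ θ)
    (hsymm : ∀ x (σ : Equiv.Perm (Fin n)), μ (x ∘ σ) = μ x)
    (hlip : CoordLipschitzOn μ L (Set.Icc 0 R))
    (hconc : ∀ x : Fin n → ℝ, (∀ i, x i ∈ Set.Icc 0 R) → ∀ i,
      ∃ g, HasStrongSupergradientOn (fun v => μ (update x i v)) g c (Set.Icc 0 R))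
    {r r' : Fin n → ℝ} (hr : ∀ i, r i ∈ Set.Icc 0 R) (hr' : ∀ i, r' i ∈ Set.Icc 0 R)
    (hmaj : Majorizes r r') (hgap : θ ≤ 𝔼 i, |descSort r i - descSort r' i|) :
    n * (c * θ ^ 2) - 2 * (L * (R * √n)) ≤ μ r' - μ r := by
  have hhybrid : n * (c * θ ^ 2) ≤
      𝔼 I : Fin n → Fin n, μ (r' ∘ I) - 𝔼 I : Fin n → Fin n, μ (r ∘ I) := by
    have h := card_mul_le_expect_comp_sub (μ := μ) hr hr' fun x hx i =>
      (hconc x hx i).elim fun g hg => hg.mul_sq_le_expect_sub hc hmaj hr hr' hθ hgap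
    rwa [Fintype.card_fin] at h
  have herr := abs_le.1 (abs_expect_comp_sub_le hL hR hsymm hlip hr)
  have herr' := abs_le.1 (abs_expect_comp_sub_le hL hR hsymm hlip hr')
  linarith [herr.1, herr'.2]

end SymmetricFunction

/-! ### Radially decreasing densities -/

section Radial

open Metric Module

lemma setIntegral_le_setIntegral_of_sign {α : Type*} [MeasurableSpace α] {μ : Measure α}
    {f : α → ℝ} {A B : Set α} (hA : MeasurableSet A) (hB : MeasurableSet B)
    (hfA : IntegrableOn f A μ) (hfB : IntegrableOn f B μ)
    (hAB : ∀ x ∈ A \ B, 0 ≤ f x) (hBA : ∀ x ∈ B \ A, f x ≤ 0) :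
    ∫ x in B, f x ∂μ ≤ ∫ x in A, f x ∂μ := by
  rw [← integral_indicator hA, ← integral_indicator hB]
  refine integral_mono (hfB.integrable_indicator hB) (hfA.integrable_indicator hA) fun x => ?_
  by_cases hxA : x ∈ A <;> by_cases hxB : x ∈ B
  · simp [hxA, hxB]
  · simpa [hxA, hxB] using hAB x ⟨hxA, hxB⟩
  · simpa [hxA, hxB] using hBA x ⟨hxB, hxA⟩
  · simp [hxA, hxB]

variable {E : Type*} [NormedAddCommGroup E]

lemma integrableOn_closedBall_of_bound [MeasurableSpace E] [ProperSpace E] (μ : Measure E)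
    [IsFiniteMeasureOnCompacts μ] {q : E → ℝ} {b : ℝ} (hq : Measurable q)
    (hb : ∀ w, |q w| ≤ b) (t : ℝ) : IntegrableOn q (closedBall 0 t) μ :=
  Measure.integrableOn_of_bounded measure_closedBall_lt_top.ne hq.aestronglyMeasurable
    (.of_forall hb)

variable [NormedSpace ℝ E]

/-- On every ray from the origin, up to radius `R`, the function `q` decreases at rate at least `c`
with respect to the volume parameter `t ^ finrank ℝ E`. -/
def DecreasesRadially (q : E → ℝ) (c R : ℝ) : Prop :=
  ∀ u : E, ‖u‖ = 1 → AntitoneOn (fun t : ℝ => q (t • u) + c * t ^ finrank ℝ E) (Set.Icc 0 R)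

lemma DecreasesRadially.of_le {q : E → ℝ} {c c' R : ℝ} (hq : DecreasesRadially q c R)
    (hc : c' ≤ c) : DecreasesRadially q c' R := by
  intro u hu a ha b hb hab
  have hdec := hq u hu ha hb hab
  have hpow : 0 ≤ (c - c') * (b ^ finrank ℝ E - a ^ finrank ℝ E) :=
    mul_nonneg (sub_nonneg.2 hc) (sub_nonneg.2 (pow_le_pow_left₀ ha.1 hab _))
  dsimp only at hdec ⊢
  linarith

/-- The value of `q` at distance `s` from the origin in the direction of `w`. -/
def atRadius (q : E → ℝ) (s : ℝ) (w : E) : ℝ := q (s • ‖w‖⁻¹ • w)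

lemma atRadius_smul (q : E → ℝ) (s : ℝ) {l : ℝ} (hl : 0 < l) (w : E) :
    atRadius q s (l • w) = atRadius q s w := by
  rw [atRadius, atRadius, norm_smul, Real.norm_of_nonneg hl.le, mul_inv_rev, mul_smul,
    inv_smul_smul₀ hl.ne']

lemma atRadius_norm (q : E → ℝ) {w : E} (hw : w ≠ 0) : atRadius q ‖w‖ w = q w := by
  rw [atRadius, smul_inv_smul₀ (norm_ne_zero_iff.2 hw)]

/-- The function that agrees with `q` on the sphere of radius `s` and decreases on every ray at
rate exactly `c` with respect to `t ^ finrank ℝ E`. -/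
def radialComparison (q : E → ℝ) (c s : ℝ) (w : E) : ℝ :=
  atRadius q s w + c * s ^ finrank ℝ E - c * ‖w‖ ^ finrank ℝ E

lemma DecreasesRadially.radialComparison_le {q : E → ℝ} {c R s : ℝ} (hq : DecreasesRadially q c R)
    (hs : s ∈ Set.Icc 0 R) {w : E} (hw : w ≠ 0) (hws : ‖w‖ ≤ s) :
    radialComparison q c s w ≤ q w := by
  have h := hq _ (norm_smul_inv_norm (𝕜 := ℝ) hw) ⟨norm_nonneg w, hws.trans hs.2⟩ hs hws
  have hself := atRadius_norm q hw
  simp only [radialComparison, atRadius, RCLike.ofReal_real_eq_id, id_eq] at *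
  linarith

lemma DecreasesRadially.le_radialComparison {q : E → ℝ} {c R s : ℝ} (hq : DecreasesRadially q c R)
    (hs : s ∈ Set.Icc 0 R) {w : E} (hw : w ≠ 0) (hsw : s ≤ ‖w‖) (hwR : ‖w‖ ≤ R) :
    q w ≤ radialComparison q c s w := by
  have h := hq _ (norm_smul_inv_norm (𝕜 := ℝ) hw) hs ⟨norm_nonneg w, hwR⟩ hsw
  have hself := atRadius_norm q hw
  simp only [radialComparison, atRadius, RCLike.ofReal_real_eq_id, id_eq] at *
  linarith

variable [MeasurableSpace E] [BorelSpace E] [FiniteDimensional ℝ E]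
  (μ : Measure E) [μ.IsAddHaarMeasure]

lemma abs_setIntegral_closedBall_sub_le {q : E → ℝ} {b s t : ℝ} (hq : Measurable q)
    (hb : ∀ w, |q w| ≤ b) (hs : 0 ≤ s) (ht : 0 ≤ t) :
    |∫ w in closedBall 0 t, q w ∂μ - ∫ w in closedBall 0 s, q w ∂μ| ≤
      b * μ.real (ball 0 1) * |t ^ finrank ℝ E - s ^ finrank ℝ E| := by
  wlog hst : s ≤ t generalizing s t
  · rw [abs_sub_comm, abs_sub_comm (t ^ _)]
    exact this ht hs (le_of_not_ge hst)
  have hsub : closedBall (0 : E) s ⊆ closedBall 0 t := closedBall_subset_closedBall hst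
  have hvol : μ.real (closedBall 0 t \ closedBall 0 s) =
      μ.real (ball 0 1) * |t ^ finrank ℝ E - s ^ finrank ℝ E| := by
    rw [measureReal_sdiff hsub measurableSet_closedBall measure_closedBall_lt_top.ne,
      μ.addHaar_real_closedBall _ hs, μ.addHaar_real_closedBall _ ht, ← sub_mul, mul_comm,
      abs_of_nonneg (sub_nonneg.2 (pow_le_pow_left₀ hs hst _))]
  rw [← setIntegral_sdiff measurableSet_closedBall
    (integrableOn_closedBall_of_bound μ hq hb t) hsub, mul_assoc, ← hvol, ← Real.norm_eq_abs]
  exact norm_setIntegral_le_of_norm_le_const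
    ((measure_mono Set.sdiff_subset).trans_lt measure_closedBall_lt_top) fun w _ => hb w

lemma integrableOn_closedBall_of_continuous {f : E → ℝ} (hf : Continuous f) (t : ℝ) :
    IntegrableOn f (closedBall 0 t) μ :=
  hf.continuousOn.integrableOn_compact (isCompact_closedBall 0 t)

lemma integrableOn_closedBall_atRadius {q : E → ℝ} {b : ℝ} (hq : Measurable q)
    (hb : ∀ w, |q w| ≤ b) (s t : ℝ) : IntegrableOn (atRadius q s) (closedBall 0 t) μ :=
  integrableOn_closedBall_of_bound μ (hq.comp (by fun_prop)) (fun _ => hb _) t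

lemma integrableOn_closedBall_radialComparison {q : E → ℝ} {b : ℝ} (hq : Measurable q)
    (hb : ∀ w, |q w| ≤ b) (c s t : ℝ) :
    IntegrableOn (radialComparison q c s) (closedBall 0 t) μ :=
  ((integrableOn_closedBall_atRadius μ hq hb s t).add
    (integrableOn_closedBall_of_continuous μ continuous_const t)).sub
    (integrableOn_closedBall_of_continuous μ (by fun_prop) t)

variable [Nontrivial E]

lemma setIntegral_closedBall_of_smul_invariant {f : E → ℝ}
    (hf : ∀ l : ℝ, 0 < l → ∀ w, f (l • w) = f w) {t : ℝ} (ht : 0 ≤ t) :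
    ∫ w in closedBall 0 t, f w ∂μ = t ^ finrank ℝ E * ∫ w in closedBall 0 1, f w ∂μ := by
  rcases ht.eq_or_lt with rfl | ht
  · simp [Measure.restrict_singleton, finrank_pos.ne']
  · have h := μ.setIntegral_comp_smul_of_pos f (closedBall 0 1) ht
    simp only [hf t ht, smul_unitClosedBall_of_nonneg ht.le, smul_eq_mul] at h
    rw [h, mul_inv_cancel_left₀ (by positivity)]

lemma setIntegral_closedBall_norm_pow_finrank {t : ℝ} (ht : 0 ≤ t) :
    ∫ w in closedBall 0 t, ‖w‖ ^ finrank ℝ E ∂μ =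
      μ.real (ball 0 1) / 2 * (t ^ finrank ℝ E) ^ 2 := by
  set d := finrank ℝ E
  have hd : d ≠ 0 := finrank_pos.ne'
  calc ∫ w in closedBall 0 t, ‖w‖ ^ d ∂μ
      = ∫ w, (Set.Iic t).indicator (· ^ d) ‖w‖ ∂μ := by
        rw [← integral_indicator measurableSet_closedBall]
        congr with w
        simp [Set.indicator]
    _ = d • μ.real (ball 0 1) •
          ∫ y in Set.Ioi 0, y ^ (d - 1) • (Set.Iic t).indicator (· ^ d) y :=
        integral_fun_norm_addHaar μ _
    _ = d • μ.real (ball 0 1) • ∫ y in 0..t, y ^ (2 * d - 1) := by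
        rw [intervalIntegral.integral_of_le ht, ← Set.Ioi_inter_Iic,
          ← setIntegral_indicator measurableSet_Iic]
        congr with y
        by_cases hy : y ∈ Set.Iic t
        · rw [Set.indicator_of_mem hy, Set.indicator_of_mem hy, smul_eq_mul, ← pow_add]
          congr 1
          lia
        · rw [Set.indicator_of_notMem hy, Set.indicator_of_notMem hy, smul_zero]
    _ = μ.real (ball 0 1) / 2 * (t ^ d) ^ 2 := by
        rw [integral_pow, Nat.sub_add_cancel (by lia), zero_pow (by lia), Nat.cast_sub (by lia),
          nsmul_eq_mul, smul_eq_mul, mul_comm 2 d, pow_mul]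
        push_cast
        field_simp
        ring

lemma setIntegral_closedBall_radialComparison {q : E → ℝ} {b : ℝ} (hq : Measurable q)
    (hb : ∀ w, |q w| ≤ b) (c s : ℝ) {t : ℝ} (ht : 0 ≤ t) :
    ∫ w in closedBall 0 t, radialComparison q c s w ∂μ =
      t ^ finrank ℝ E * ∫ w in closedBall 0 1, atRadius q s w ∂μ -
        c * μ.real (ball 0 1) *
          ((t ^ finrank ℝ E) ^ 2 / 2 - s ^ finrank ℝ E * t ^ finrank ℝ E) := by
  have hdir := integrableOn_closedBall_atRadius μ hq hb s t
  have hcont {f : E → ℝ} (hf : Continuous f) := integrableOn_closedBall_of_continuous μ hf t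
  have hpow := hcont (f := fun w => c * ‖w‖ ^ finrank ℝ E) (by fun_prop)
  have hconst := hcont (f := fun _ => c * s ^ finrank ℝ E) continuous_const
  simp only [radialComparison]
  rw [integral_sub (f := fun w => atRadius q s w + c * s ^ finrank ℝ E) (hdir.add hconst) hpow,
    integral_add hdir hconst, integral_const_mul c fun w : E => ‖w‖ ^ finrank ℝ E,
    setIntegral_closedBall_norm_pow_finrank μ ht, setIntegral_const,
    setIntegral_closedBall_of_smul_invariant μ (fun l hl w => atRadius_smul q s hl w) ht,
    μ.addHaar_real_closedBall _ ht, smul_eq_mul]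
  ring

lemma integral_closedBall_le_of_decreasesRadially {q : E → ℝ} {b c R s t : ℝ} (hq : Measurable q)
    (hb : ∀ w, |q w| ≤ b) (hdec : DecreasesRadially q c R) (hs : s ∈ Set.Icc 0 R)
    (ht : t ∈ Set.Icc 0 R) :
    ∫ w in closedBall 0 t, q w ∂μ ≤ ∫ w in closedBall 0 s, q w ∂μ +
      (∫ w in closedBall 0 1, atRadius q s w ∂μ) * (t ^ finrank ℝ E - s ^ finrank ℝ E) -
      c * μ.real (ball 0 1) / 2 * (t ^ finrank ℝ E - s ^ finrank ℝ E) ^ 2 := by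
  have hq_int (τ : ℝ) := integrableOn_closedBall_of_bound μ hq hb τ
  have hcomp_int (τ : ℝ) := integrableOn_closedBall_radialComparison μ hq hb c s τ
  have hcross : ∫ w in closedBall 0 t, (q w - radialComparison q c s w) ∂μ ≤
      ∫ w in closedBall 0 s, (q w - radialComparison q c s w) ∂μ := by
    refine setIntegral_le_setIntegral_of_sign measurableSet_closedBall measurableSet_closedBall
      ((hq_int s).sub (hcomp_int s)) ((hq_int t).sub (hcomp_int t)) ?_ ?_ <;> intro w hw <;>
      simp only [Set.mem_sdiff, mem_closedBall_zero_iff, not_le] at hw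
    · have hw0 : w ≠ 0 := norm_pos_iff.1 (ht.1.trans_lt hw.2)
      exact sub_nonneg.2 (hdec.radialComparison_le hs hw0 hw.1)
    · have hw0 : w ≠ 0 := norm_pos_iff.1 (hs.1.trans_lt hw.2)
      exact sub_nonpos.2 (hdec.le_radialComparison hs hw0 hw.2.le (hw.1.trans ht.2))
  rw [integral_sub (hq_int t) (hcomp_int t), integral_sub (hq_int s) (hcomp_int s),
    setIntegral_closedBall_radialComparison μ hq hb c s hs.1,
    setIntegral_closedBall_radialComparison μ hq hb c s ht.1] at hcross
  linear_combination hcross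

end Radial

/-! ### Nearest-point cells -/

section NearestCells

open Metric

variable {ι E : Type*} [LinearOrder ι]

section MetricSpace

variable [PseudoMetricSpace E] {x : ι → E} {s : Set ι} {j j' : ι} {y : E}

/-- Among the points `x j` with `j ∈ s`, the one closest to `y` is `x j`; ties are broken in
favour of the smaller index, so that the nearest index is unique. -/
def IsNearest (x : ι → E) (s : Set ι) (y : E) (j : ι) : Prop :=
  j ∈ s ∧ ∀ j' ∈ s, toLex (dist y (x j), j) ≤ toLex (dist y (x j'), j')

lemma exists_isNearest [Finite ι] (x : ι → E) (hs : s.Nonempty) (y : E) :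
    ∃ j, IsNearest x s y j :=
  s.toFinite.exists_minimalFor (fun j => toLex (dist y (x j), j)) s hs |>.imp fun _ hj =>
    ⟨hj.prop, fun _ hj' => (le_total _ _).elim id (hj.le_of_le hj')⟩

lemma IsNearest.dist_le (h : IsNearest x s y j) (hj' : j' ∈ s) : dist y (x j) ≤ dist y (x j') :=
  Prod.Lex.monotone_fst _ _ (h.2 j' hj')

lemma IsNearest.unique (h : IsNearest x s y j) (h' : IsNearest x s y j') : j = j' :=
  congrArg (fun p => (ofLex p).2) (le_antisymm (h.2 j' h'.1) (h'.2 j h.1))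

lemma measurableSet_isNearest [MeasurableSpace E] [OpensMeasurableSpace E]
    [SecondCountableTopology E] [Finite ι] {α : Type*} [MeasurableSpace α] {x : α → ι → E}
    {s : α → Set ι} {y : α → E} (hx : Measurable x) (hs : Measurable s) (hy : Measurable y)
    (j : ι) : MeasurableSet {a | IsNearest (x a) (s a) (y a) j} := by
  have hmem (j : ι) : MeasurableSet {a | j ∈ s a} :=
    measurableSet_setOfPred.2 (measurable_set_iff.1 hs j)
  have hdist (j : ι) : Measurable fun a => dist (y a) (x a j) := hy.dist (measurable_pi_iff.1 hx j)
  simp only [IsNearest, Prod.Lex.toLex_le_toLex, Set.ofPred_and, Set.ofPred_forall]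
  refine (hmem j).inter (.iInter fun j' => (hmem j').imp ?_)
  exact (measurableSet_lt (hdist j) (hdist j')).union
    ((measurableSet_eq_fun (hdist j) (hdist j')).inter (.const _))

end MetricSpace

variable [NormedAddCommGroup E] {x : ι → E} {s : Set ι} {K : Set E} {j : ι}

/-- The part of `K` in which `x j` is the nearest of the points with index in `s`, translated by
`-x j`. -/
def nearestCell (K : Set E) (x : ι → E) (s : Set ι) (j : ι) : Set E :=
  {w | x j + w ∈ K ∧ IsNearest x s (x j + w) j}

lemma IsNearest.of_le_smul [NormedSpace ℝ E] {u : E} {a b : ℝ} (ha : 0 ≤ a) (hab : a ≤ b)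
    (h : IsNearest x s (x j + b • u) j) : IsNearest x s (x j + a • u) j := by
  refine ⟨h.1, fun j' hj' => ?_⟩
  have hnearest := h.2 j' hj'
  have hself (c : ℝ) (hc : 0 ≤ c) : dist (x j + c • u) (x j) = c * ‖u‖ := by
    rw [dist_eq_norm, add_sub_cancel_left, norm_smul, Real.norm_of_nonneg hc]
  have hmove : dist (x j + b • u) (x j') ≤ (b - a) * ‖u‖ + dist (x j + a • u) (x j') := by
    refine (dist_triangle _ (x j + a • u) _).trans_eq ?_
    rw [dist_add_left, dist_eq_norm, ← sub_smul, norm_smul, Real.norm_of_nonneg (sub_nonneg.2 hab)]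
  rw [Prod.Lex.toLex_le_toLex, hself _ (ha.trans hab)] at hnearest
  rw [Prod.Lex.toLex_le_toLex, hself _ ha]
  rcases hnearest with hlt | ⟨heq, hle⟩
  · left
    linarith
  · rcases (show a * ‖u‖ ≤ dist (x j + a • u) (x j') by linarith).lt_or_eq with hlt | heq'
    · exact .inl hlt
    · exact .inr ⟨heq', hle⟩

lemma smul_mem_nearestCell_of_le [NormedSpace ℝ E] (hK : Convex ℝ K) (hx : x j ∈ K) {u : E}
    {a b : ℝ} (ha : 0 ≤ a) (hab : a ≤ b) (h : b • u ∈ nearestCell K x s j) :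
    a • u ∈ nearestCell K x s j := by
  refine ⟨?_, h.2.of_le_smul ha hab⟩
  rcases (ha.trans hab).eq_or_lt with rfl | hb
  · rw [le_antisymm hab ha]
    exact h.1
  · have := hK.add_smul_mem hx h.1 (t := a / b) ⟨by positivity, (div_le_one hb).2 hab⟩
    rwa [smul_smul, div_mul_cancel₀ _ hb.ne'] at this

/-- The number of cells `nearestCell K x s j` that contain `w`. -/
def nearestCellCount [Fintype ι] (K : Set E) (x : ι → E) (s : Set ι) (w : E) : ℝ :=
  ∑ j, (nearestCell K x s j).indicator 1 w

lemma abs_nearestCellCount_le [Fintype ι] (K : Set E) (x : ι → E) (s : Set ι) (w : E) :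
    |nearestCellCount K x s w| ≤ Fintype.card ι := by
  have hterm (j : ι) : |(nearestCell K x s j).indicator (1 : E → ℝ) w| ≤ 1 := by
    by_cases hw : w ∈ nearestCell K x s j <;> simp [hw]
  calc |nearestCellCount K x s w|
      ≤ ∑ j, |(nearestCell K x s j).indicator (1 : E → ℝ) w| := Finset.abs_sum_le_sum_abs _ _
    _ ≤ ∑ _j : ι, (1 : ℝ) := Finset.sum_le_sum fun j _ => hterm j
    _ = Fintype.card ι := by simp

lemma sum_indicator_nearestCell_inter_closedBall [Fintype ι] (K : Set E) (x : ι → E) (s : Set ι)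
    (ρ : ℝ) (y : E) :
    ∑ j, (nearestCell K x s j ∩ closedBall 0 ρ).indicator (1 : E → ℝ) (y - x j) =
      (K ∩ {y | ∃ j ∈ s, dist y (x j) ≤ ρ}).indicator 1 y := by
  have hmem (j : ι) : y - x j ∈ nearestCell K x s j ∩ closedBall 0 ρ ↔
      y ∈ K ∧ IsNearest x s y j ∧ dist y (x j) ≤ ρ := by
    simp [nearestCell, dist_eq_norm, and_assoc]
  by_cases hy : y ∈ K ∩ {y | ∃ j ∈ s, dist y (x j) ≤ ρ}
  · obtain ⟨hyK, j, hj, hjρ⟩ := hy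
    obtain ⟨i, hi⟩ := exists_isNearest x ⟨j, hj⟩ y
    have hiρ : dist y (x i) ≤ ρ := (hi.dist_le hj).trans hjρ
    rw [Finset.sum_eq_single i, Set.indicator_of_mem ((hmem i).2 ⟨hyK, hi, hiρ⟩),
      Set.indicator_of_mem (show y ∈ K ∩ {y | ∃ j ∈ s, dist y (x j) ≤ ρ} from ⟨hyK, j, hj, hjρ⟩)]
    · rfl
    · exact fun i' _ hne => Set.indicator_of_notMem
        (fun h => hne (((hmem i').1 h).2.1.unique hi)) _
    · simp
  · rw [Set.indicator_of_notMem hy]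
    refine Finset.sum_eq_zero fun j _ => Set.indicator_of_notMem (fun h => hy ?_) _
    obtain ⟨hyK, hnear, hρ⟩ := (hmem j).1 h
    exact ⟨hyK, j, hnear.1, hρ⟩

variable [MeasurableSpace E] [BorelSpace E] [SecondCountableTopology E]

lemma measurableSet_nearestCell [Finite ι] {α : Type*} [MeasurableSpace α] {x : α → ι → E}
    {s : α → Set ι} {w : α → E} (hK : MeasurableSet K) (hx : Measurable x) (hs : Measurable s)
    (hw : Measurable w) (j : ι) : MeasurableSet {a | w a ∈ nearestCell K (x a) (s a) j} :=
  have hxw : Measurable fun a => x a j + w a := (measurable_pi_iff.1 hx j).add hw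
  (hxw hK).inter (measurableSet_isNearest hx hs hxw j)

variable [Fintype ι]

lemma measurable_nearestCellCount {α : Type*} [MeasurableSpace α] {x : α → ι → E}
    {s : α → Set ι} {w : α → E} (hK : MeasurableSet K) (hx : Measurable x) (hs : Measurable s)
    (hw : Measurable w) : Measurable fun a => nearestCellCount K (x a) (s a) (w a) :=
  Finset.measurable_fun_sum _ fun j _ =>
    measurable_one.indicator (measurableSet_nearestCell hK hx hs hw j)

lemma integral_indicator_exists_dist_le [ProperSpace E] (μ : Measure E) [μ.IsAddHaarMeasure]
    (hK : MeasurableSet K) (x : ι → E) (s : Set ι) (ρ : ℝ) :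
    ∫ y in K, {y | ∃ j ∈ s, dist y (x j) ≤ ρ}.indicator (1 : E → ℝ) y ∂μ =
      ∫ w in closedBall 0 ρ, nearestCellCount K x s w ∂μ := by
  have hcell (j : ι) : MeasurableSet (nearestCell K x s j) :=
    measurableSet_nearestCell hK (x := fun _ => x) (s := fun _ => s) measurable_const
      measurable_const measurable_id j
  have hInt (j : ι) : Integrable ((nearestCell K x s j ∩ closedBall 0 ρ).indicator (1 : E → ℝ)) μ :=
    (integrable_indicator_iff ((hcell j).inter measurableSet_closedBall)).2 <|
      integrableOn_const ((measure_mono Set.inter_subset_right).trans_lt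
        measure_closedBall_lt_top).ne
  calc ∫ y in K, {y | ∃ j ∈ s, dist y (x j) ≤ ρ}.indicator (1 : E → ℝ) y ∂μ
      = ∫ y, ∑ j, (nearestCell K x s j ∩ closedBall 0 ρ).indicator (1 : E → ℝ) (y - x j) ∂μ := by
        simp only [sum_indicator_nearestCell_inter_closedBall]
        rw [← integral_indicator hK, Set.indicator_indicator]
    _ = ∑ j, ∫ w, (nearestCell K x s j ∩ closedBall 0 ρ).indicator (1 : E → ℝ) w ∂μ := by
        rw [integral_finsetSum _ fun j _ => (hInt j).comp_sub_right (x j)]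
        exact Finset.sum_congr rfl fun j _ => integral_sub_right_eq_self _ (x j)
    _ = ∫ w in closedBall 0 ρ, nearestCellCount K x s w ∂μ := by
        rw [← integral_finsetSum _ fun j _ => hInt j, ← integral_indicator measurableSet_closedBall]
        congr with w
        by_cases hw : w ∈ closedBall 0 ρ <;>
          simp [nearestCellCount, Set.inter_comm _ (closedBall _ _),
            ← Set.indicator_indicator, hw]

end NearestCells

/-! ### Resampling one coordinate -/

section Resampling

variable {ι : Type*} [Fintype ι] [DecidableEq ι] {α : ι → Type*} [∀ i, MeasurableSpace (α i)]

lemma measurePreserving_update_pi (μ : ∀ i, Measure (α i)) [∀ i, IsProbabilityMeasure (μ i)]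
    (i : ι) : MeasurePreserving (fun q : (∀ i, α i) × α i => update q.1 i q.2)
      ((Measure.pi μ).prod (μ i)) (Measure.pi μ) := by
  refine ⟨measurable_update', (Measure.pi_eq fun s hs => ?_).symm⟩
  have hpre : (fun q : (∀ i, α i) × α i => update q.1 i q.2) ⁻¹' Set.univ.pi s =
      Set.univ.pi (update s i Set.univ) ×ˢ s i := by
    ext q
    simp only [Set.mem_preimage, Set.mem_prod, Set.mem_univ_pi,
      forall_update_iff q.1 (fun j y => y ∈ s j), forall_update_iff s (fun j t => q.1 j ∈ t),
      Set.mem_univ, true_and, and_comm]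
  rw [Measure.map_apply measurable_update' (.univ_pi hs), hpre, Measure.prod_prod, Measure.pi_pi]
  simp only [apply_update fun j => μ j]
  rw [Finset.prod_update_of_mem (Finset.mem_univ i), measure_univ, one_mul,
    Finset.sdiff_singleton_eq_erase, Finset.prod_erase_mul _ _ (Finset.mem_univ i)]

end Resampling

/-! ### The random compatibility graph -/

section RandomGraph

/-- The ambient space of the locations. -/
abbrev Point (k : ℕ) : Type := EuclideanSpace ℝ (Fin k)

/-- The cube `[a, b]^k`. -/
def cube (k : ℕ) (a b : ℝ) : Set (Point k) := {x | ∀ i, x i ∈ Set.Icc a b}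

variable {k : ℕ} {a b a' b' : ℝ}

lemma isClosed_cube (k : ℕ) (a b : ℝ) : IsClosed (cube k a b) := by
  rw [cube, Set.ofPred_forall]
  exact isClosed_iInter fun i => isClosed_Icc.preimage (by fun_prop)

lemma measurableSet_cube (k : ℕ) (a b : ℝ) : MeasurableSet (cube k a b) :=
  (isClosed_cube k a b).measurableSet

lemma convex_cube (k : ℕ) (a b : ℝ) : Convex ℝ (cube k a b) :=
  fun _ hx _ hy _ _ hs ht hst i => convex_Icc a b (hx i) (hy i) hs ht hst

lemma cube_subset_cube (ha : a' ≤ a) (hb : b ≤ b') : cube k a b ⊆ cube k a' b' :=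
  fun _ hx i => Set.Icc_subset_Icc ha hb (hx i)

lemma add_mem_cube {x w : Point k} (hx : x ∈ cube k a b) (ha : a' + ‖w‖ ≤ a) (hb : b + ‖w‖ ≤ b') :
    x + w ∈ cube k a' b' := by
  intro i
  have hwi := abs_le.1 (PiLp.norm_apply_le w i)
  rw [PiLp.add_apply]
  exact ⟨by linarith [(hx i).1, hwi.1], by linarith [(hx i).2, hwi.2]⟩

lemma volume_cube (k : ℕ) (a b : ℝ) : volume (cube k a b) = ENNReal.ofReal (b - a) ^ k := by
  have hpre : cube k a b = WithLp.ofLp ⁻¹' Set.univ.pi fun _ => Set.Icc a b :=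
    Set.ext fun x => Set.mem_univ_pi.symm
  rw [hpre, (PiLp.volume_preserving_ofLp (Fin k)).measure_preimage
    (MeasurableSet.univ_pi fun _ => measurableSet_Icc).nullMeasurableSet, volume_pi_pi]
  simp

lemma unifCube_eq_restrict_cube (k : ℕ) : unifCube k = volume.restrict (cube k 0 1) := rfl

instance isProbabilityMeasure_unifCube : IsProbabilityMeasure (unifCube k) :=
  ⟨by simp [unifCube_eq_restrict_cube, volume_cube]⟩

/-- The locations of `s` supply nodes and `m` demand nodes. -/
abbrev Config (k s m : ℕ) : Type := (Fin s → Point k) × (Fin m → Point k)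

/-- The law of independent uniform locations. -/
abbrev configLaw (k s m : ℕ) : Measure (Config k s m) :=
  (Measure.pi fun _ => unifCube k).prod (Measure.pi fun _ => unifCube k)

variable {s m : ℕ}

lemma measurePreserving_update_supply (i : Fin s) :
    MeasurePreserving (fun q : Config k s m × Point k => (update q.1.1 i q.2, q.1.2))
      ((configLaw k s m).prod (unifCube k)) (configLaw k s m) := by
  let supplies : Measure (Fin s → Point k) := .pi fun _ => unifCube k
  let demands : Measure (Fin m → Point k) := .pi fun _ => unifCube k
  have hswap : MeasurePreserving Prod.swap (demands.prod supplies) (supplies.prod demands) :=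
    Measure.measurePreserving_swap
  exact hswap.comp <| (((MeasurePreserving.id demands).prod
    (measurePreserving_update_pi (fun _ : Fin s => unifCube k) i)).comp
      (measurePreserving_prodAssoc demands supplies (unifCube k))).comp
        (Measure.measurePreserving_swap.prod (.id (unifCube k)))

lemma measurePreserving_update_demand (j : Fin m) :
    MeasurePreserving (fun q : Config k s m × Point k => (q.1.1, update q.1.2 j q.2))
      ((configLaw k s m).prod (unifCube k)) (configLaw k s m) :=
  ((MeasurePreserving.id _).prod (measurePreserving_update_pi (fun _ => unifCube k) j)).comp
    (measurePreserving_prodAssoc _ _ (unifCube k))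

lemma ae_demand_mem_cube (k s m : ℕ) : ∀ᵐ p ∂configLaw k s m, ∀ j, p.2 j ∈ cube k 0 1 := by
  refine ae_all_iff.2 fun j => ?_
  exact ((measurePreserving_eval (fun _ : Fin m => unifCube k) j).comp
    measurePreserving_snd).quasiMeasurePreserving.ae (ae_restrict_mem (measurableSet_cube k 0 1))

variable (n : ℕ) (r : Fin s → ℝ)

lemma measurable_comp_adjOf {β : Type*} [MeasurableSpace β] (F : (Fin s → Fin m → Prop) → β) :
    Measurable fun p : Config k s m => F (adjOf k n p.1 r p.2) := by
  refine (Measurable.of_discrete (f := F)).comp <|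
    measurable_pi_lambda _ fun i => measurable_pi_lambda _ fun j => measurableSet_setOfPred.1 ?_
  exact measurableSet_le (by fun_prop) (by fun_prop)

lemma integrable_comp_adjOf (F : (Fin s → Fin m → Prop) → ℝ) :
    Integrable (fun p : Config k s m => F (adjOf k n p.1 r p.2)) (configLaw k s m) := by
  obtain ⟨B, hB⟩ := (Set.finite_range fun adj => ‖F adj‖).bddAbove
  exact .of_bound (measurable_comp_adjOf n r F).aestronglyMeasurable B
    (.of_forall fun _ => hB ⟨_, rfl⟩)

lemma muU_eq_integral_configLaw :
    muU k n m r = ∫ p, (matchingNumber (adjOf k n p.1 r p.2) : ℝ) ∂configLaw k s m :=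
  (integral_prod _ (integrable_comp_adjOf n r fun adj => (matchingNumber adj : ℝ))).symm

lemma muU_comp_perm (σ : Equiv.Perm (Fin s)) : muU k n m (r ∘ σ) = muU k n m r := by
  have hσ := measurePreserving_piCongrLeft (fun _ : Fin s => unifCube k) σ
  have hadj (S : Fin s → Point k) (D : Fin m → Point k) :
      adjOf k n (MeasurableEquiv.piCongrLeft (fun _ => Point k) σ S) r D ∘ σ =
        adjOf k n S (r ∘ σ) D := by
    funext i j
    simp only [comp_apply, adjOf, MeasurableEquiv.coe_piCongrLeft, Equiv.piCongrLeft_apply_apply]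
  symm
  unfold muU
  rw [← hσ.integral_comp']
  congr with S
  congr with D
  exact congrArg Nat.cast ((matchingNumber_comp_perm _ σ).symm.trans
    (congrArg matchingNumber (hadj S D)))

lemma adjOf_update (S : Fin s → Point k) (D : Fin m → Point k) (i : Fin s) (x : Point k) (c : ℝ) :
    adjOf k n (update S i x) (update r i c) D =
      update (adjOf k n S r D) i fun j => dist x (D j) ≤ (c / n) ^ ((1 : ℝ) / k) := by
  funext i' j
  by_cases hi : i' = i
  · subst hi
    simp only [adjOf, update_self]
  · simp only [adjOf, update_of_ne hi]

end RandomGraph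

/-! ### The matching number as an integral over the range of one supply node -/

section AugmentingDensity

variable {k s m : ℕ} (n : ℕ) (r : Fin s → ℝ) (i : Fin s)

/-- The number of demand nodes `j` such that a supply node at displacement `w` from `j` lies in the
unit cube and has `j` as its nearest augmenting demand node. -/
def augmentingCount (p : Config k s m) (w : Point k) : ℝ :=
  nearestCellCount (cube k 0 1) p.2 (augmenting (adjOf k n p.1 r p.2) i) w

lemma abs_augmentingCount_le (p : Config k s m) (w : Point k) :
    |augmentingCount n r i p w| ≤ m :=
  (abs_nearestCellCount_le _ _ _ _).trans_eq (by rw [Fintype.card_fin])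

lemma measurable_uncurry_augmentingCount :
    Measurable (uncurry (augmentingCount n r i : Config k s m → Point k → ℝ)) :=
  measurable_nearestCellCount (measurableSet_cube k 0 1) (by fun_prop)
    ((measurable_comp_adjOf n r fun adj => augmenting adj i).comp measurable_fst) measurable_snd

lemma integrable_augmentingCount (w : Point k) :
    Integrable (augmentingCount n r i · w) (configLaw k s m) :=
  .of_bound ((measurable_uncurry_augmentingCount n r i).comp
    (measurable_id.prodMk measurable_const)).aestronglyMeasurable m
      (.of_forall fun p => abs_augmentingCount_le n r i p w)

/-- The density at displacement `w` of the event that supply node `i`, whose own range is ignored,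
increases the matching number by serving its nearest augmenting demand node. -/
def augmentingDensity (k n m : ℕ) {s : ℕ} (r : Fin s → ℝ) (i : Fin s) (w : Point k) : ℝ :=
  ∫ p, augmentingCount n r i p w ∂configLaw k s m

lemma measurable_augmentingDensity : Measurable (augmentingDensity k n m r i) :=
  ((measurable_uncurry_augmentingCount n r i).stronglyMeasurable.integral_prod_left'
    (μ := configLaw k s m)).measurable

lemma abs_augmentingDensity_le (w : Point k) : |augmentingDensity k n m r i w| ≤ m := by
  simpa [augmentingDensity] using
    norm_integral_le_of_norm_le_const (μ := configLaw k s m) (f := (augmentingCount n r i · w))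
      (.of_forall fun p => abs_augmentingCount_le n r i p w)

lemma integral_matchingNumber_adjOf_update (p : Config k s m) (c : ℝ) :
    ∫ x, (matchingNumber (adjOf k n (update p.1 i x) (update r i c) p.2) : ℝ) ∂unifCube k =
      matchingNumber (update (adjOf k n p.1 r p.2) i ⊥) +
        ∫ w in Metric.closedBall 0 ((c / n) ^ ((1 : ℝ) / k)), augmentingCount n r i p w := by
  let reach : Set (Point k) := {x | ∃ j ∈ augmenting (adjOf k n p.1 r p.2) i,
    dist x (p.2 j) ≤ (c / n) ^ ((1 : ℝ) / k)}
  have hreach : MeasurableSet reach := by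
    simp only [reach, ← exists_prop, Set.ofPred_exists]
    exact .iUnion fun j => .iUnion fun _ => measurableSet_closedBall
  have hupdate (x : Point k) :
      (matchingNumber (adjOf k n (update p.1 i x) (update r i c) p.2) : ℝ) =
        matchingNumber (update (adjOf k n p.1 r p.2) i ⊥) + reach.indicator 1 x := by
    rw [adjOf_update, matchingNumber_update, Nat.cast_add, Nat.cast_ite, Nat.cast_one,
      Nat.cast_zero, Set.indicator_apply]
    rfl
  simp only [hupdate]
  rw [integral_add (integrable_const _) ((integrable_const 1).indicator hreach), integral_const,
    probReal_univ, one_smul, unifCube_eq_restrict_cube]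
  exact congrArg _ (integral_indicator_exists_dist_le volume (measurableSet_cube k 0 1) _ _ _)

lemma muU_update (c : ℝ) :
    muU k n m (update r i c) =
      ∫ p, (matchingNumber (update (adjOf k n p.1 r p.2) i ⊥) : ℝ) ∂configLaw k s m +
        ∫ w in Metric.closedBall 0 ((c / n) ^ ((1 : ℝ) / k)), augmentingDensity k n m r i w := by
  set B : Set (Point k) := Metric.closedBall 0 ((c / n) ^ ((1 : ℝ) / k))
  have : IsFiniteMeasure (volume.restrict B) :=
    isFiniteMeasure_restrict.2 measure_closedBall_lt_top.ne
  have hcount : Integrable (uncurry (augmentingCount n r i))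
      ((configLaw k s m).prod (volume.restrict B)) :=
    .of_bound (measurable_uncurry_augmentingCount n r i).aestronglyMeasurable m
      (.of_forall fun q => abs_augmentingCount_le n r i q.1 q.2)
  have hmatch := integrable_comp_adjOf (k := k) n (update r i c) fun adj : Fin s → Fin m → Prop =>
    (matchingNumber adj : ℝ)
  have hresample := measurePreserving_update_supply (k := k) (m := m) i
  calc muU k n m (update r i c)
      = ∫ p, ∫ x, (matchingNumber (adjOf k n (update p.1 i x) (update r i c) p.2) : ℝ)
          ∂unifCube k ∂configLaw k s m := by
        rw [muU_eq_integral_configLaw, ← integral_prod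
          (fun q : Config k s m × Point k =>
            (matchingNumber (adjOf k n (update q.1.1 i q.2) (update r i c) q.1.2) : ℝ))
          (hresample.integrable_comp_of_integrable hmatch)]
        conv_lhs => rw [← hresample.map_eq]
        exact integral_map hresample.aemeasurable
          (hresample.map_eq.symm ▸ hmatch.aestronglyMeasurable)
    _ = ∫ p, (matchingNumber (update (adjOf k n p.1 r p.2) i ⊥) : ℝ) ∂configLaw k s m +
          ∫ p, (∫ w in B, augmentingCount n r i p w) ∂configLaw k s m := by
        simp only [integral_matchingNumber_adjOf_update]
        exact integral_add (integrable_comp_adjOf n r fun adj =>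
          (matchingNumber (update adj i ⊥) : ℝ)) hcount.integral_prod_left
    _ = _ := by rw [integral_integral_swap hcount]; rfl

end AugmentingDensity

/-! ### Isolated pairs of demand nodes -/

section ProductMeasures

lemma mul_measureReal_le_measureReal_prod {α β : Type*} [MeasurableSpace α] [MeasurableSpace β]
    {μ : Measure α} {ν : Measure β} [IsFiniteMeasure μ] [IsFiniteMeasure ν] {A : Set (α × β)}
    {T : Set β} {c : ℝ} (hA : MeasurableSet A) (hT : MeasurableSet T)
    (hc : ∀ y ∈ T, c ≤ μ.real {x | (x, y) ∈ A}) : c * ν.real T ≤ (μ.prod ν).real A := by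
  have hlower : ENNReal.ofReal c * ν T ≤ (μ.prod ν) A := by
    rw [Measure.prod_apply_symm hA, ← setLIntegral_const]
    refine (setLIntegral_mono' hT fun y hy => ?_).trans (setLIntegral_le_lintegral T _)
    exact ENNReal.ofReal_le_of_le_toReal (hc y hy)
  calc c * ν.real T ≤ (ENNReal.ofReal c).toReal * ν.real T :=
        mul_le_mul_of_nonneg_right
          ((le_max_left c 0).trans_eq ENNReal.toReal_ofReal'.symm) measureReal_nonneg
    _ ≤ (μ.prod ν).real A := by
        rw [Measure.real, ← ENNReal.toReal_mul]
        exact ENNReal.toReal_mono (measure_ne_top _ _) hlower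

lemma measureReal_mul_pow_card_le_pi {ι α : Type*} [Fintype ι] [MeasurableSpace α]
    {μ : Measure α} [IsProbabilityMeasure μ] {t : ι → Set α} {δ : ℝ} (hδ₀ : 0 ≤ δ) (hδ₁ : δ ≤ 1)
    (i : ι) (ht : ∀ j ≠ i, δ ≤ μ.real (t j)) :
    μ.real (t i) * δ ^ Fintype.card ι ≤ (Measure.pi fun _ => μ).real (Set.univ.pi t) := by
  classical
  have hpi : (Measure.pi fun _ => μ).real (Set.univ.pi t) = ∏ j, μ.real (t j) := by
    simp only [Measure.real, Measure.pi_pi, ENNReal.toReal_prod]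
  rw [hpi, ← Finset.mul_prod_erase _ _ (Finset.mem_univ i)]
  refine mul_le_mul_of_nonneg_left ?_ measureReal_nonneg
  calc δ ^ Fintype.card ι ≤ δ ^ (Finset.univ.erase i).card :=
        pow_le_pow_of_le_one hδ₀ hδ₁ (Finset.card_le_univ _)
    _ = ∏ _j ∈ Finset.univ.erase i, δ := (Finset.prod_const δ).symm
    _ ≤ ∏ j ∈ Finset.univ.erase i, μ.real (t j) :=
        Finset.prod_le_prod (fun _ _ => hδ₀) fun j hj => ht j (Finset.ne_of_mem_erase hj)

end ProductMeasures

section Lens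

open Metric

variable {E : Type*} [NormedAddCommGroup E] [NormedSpace ℝ E]

/-- The set of points that are closer to `x + τ • u` than `x` is, but not closer to `x + ρ • u`
than `x` is, when `u` is a unit vector. -/
def lens (x u : E) (ρ τ : ℝ) : Set E := ball (x + τ • u) τ \ closedBall (x + ρ • u) ρ

lemma dist_add_smul_self {u : E} {t : ℝ} (hu : ‖u‖ = 1) (ht : 0 ≤ t) (x : E) :
    dist (x + t • u) x = t := by
  rw [dist_self_add_left, norm_smul, hu, mul_one, Real.norm_of_nonneg ht]

lemma dist_lt_two_mul_of_mem_lens {x u y : E} {ρ τ : ℝ} (hu : ‖u‖ = 1) (hτ : 0 ≤ τ)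
    (hy : y ∈ lens x u ρ τ) : dist y x < 2 * τ := by
  linarith [mem_ball.1 hy.1, dist_triangle y (x + τ • u) x, dist_add_smul_self hu hτ x]

lemma measurableSet_lens [MeasurableSpace E] [OpensMeasurableSpace E] (x u : E) (ρ τ : ℝ) :
    MeasurableSet (lens x u ρ τ) :=
  measurableSet_ball.diff measurableSet_closedBall

lemma sub_mul_le_measureReal_lens [MeasurableSpace E] [BorelSpace E] [FiniteDimensional ℝ E]
    [Nontrivial E] (μ : Measure E) [μ.IsAddHaarMeasure] (x u : E) {ρ τ : ℝ} (hρ : 0 ≤ ρ)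
    (hτ : 0 ≤ τ) :
    (τ ^ Module.finrank ℝ E - ρ ^ Module.finrank ℝ E) * μ.real (ball 0 1) ≤
      μ.real (lens x u ρ τ) := by
  rw [sub_mul, ← Measure.addHaar_real_closedBall μ (x + τ • u) hτ,
    Measure.addHaar_real_closedBall_eq_addHaar_real_ball,
    ← Measure.addHaar_real_closedBall μ (x + ρ • u) hρ]
  exact le_measureReal_sdiff measure_closedBall_lt_top.ne

end Lens

section UnitBall

open Metric

/-- The Lebesgue measure of the unit ball in dimension `k`. -/
def unitBallVolume (k : ℕ) : ℝ := volume.real (ball (0 : Point k) 1)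

lemma unitBallVolume_pos (k : ℕ) : 0 < unitBallVolume k :=
  ENNReal.toReal_pos (measure_ball_pos _ _ one_pos).ne' measure_ball_lt_top.ne

variable {k : ℕ} {x u : Point k} {ρ τ : ℝ}

lemma one_sub_le_unifCube_compl_closedBall (x : Point k) (hρ : 0 ≤ ρ) :
    1 - ρ ^ k * unitBallVolume k ≤ (unifCube k).real (closedBall x ρ)ᶜ := by
  rw [probReal_compl_eq_one_sub measurableSet_closedBall]
  gcongr
  calc (unifCube k).real (closedBall x ρ) ≤ volume.real (closedBall x ρ) :=
        ENNReal.toReal_mono measure_closedBall_lt_top.ne (Measure.restrict_apply_le _ _)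
    _ = ρ ^ k * unitBallVolume k := by
        rw [Measure.addHaar_real_closedBall volume x hρ, finrank_euclideanSpace_fin, unitBallVolume]

lemma unifCube_real_cube {a b : ℝ} (ha : 0 ≤ a) (hab : a ≤ b) (hb : b ≤ 1) :
    (unifCube k).real (cube k a b) = (b - a) ^ k := by
  rw [unifCube_eq_restrict_cube, measureReal_restrict_apply (measurableSet_cube k a b),
    Set.inter_eq_left.2 (cube_subset_cube ha hb), Measure.real, volume_cube, ENNReal.toReal_pow,
    ENNReal.toReal_ofReal (sub_nonneg.2 hab)]

lemma sub_mul_le_unifCube_lens [NeZero k] (hu : ‖u‖ = 1) (hρ : 0 ≤ ρ) (hτ : 0 ≤ τ)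
    (hτ₄ : 2 * τ ≤ 1 / 4) (hx : x ∈ cube k (1 / 4) (3 / 4)) :
    (τ ^ k - ρ ^ k) * unitBallVolume k ≤ (unifCube k).real (lens x u ρ τ) := by
  have hsub : lens x u ρ τ ⊆ cube k 0 1 := fun y hy => by
    have hdist := dist_lt_two_mul_of_mem_lens hu hτ hy
    rw [dist_eq_norm] at hdist
    rw [← add_sub_cancel x y]
    exact add_mem_cube hx (by linarith) (by linarith)
  rw [unifCube_eq_restrict_cube, measureReal_restrict_apply (measurableSet_lens x u ρ τ),
    Set.inter_eq_left.2 hsub]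
  simpa only [finrank_euclideanSpace_fin, unitBallVolume] using
    sub_mul_le_measureReal_lens volume x u hρ hτ

end UnitBall

section IsolatedPair

open Metric

variable {k s m : ℕ}

/-- Demand node `j'` lies in a lens at demand node `j`, which is away from the boundary of the unit
cube, and every other node except possibly supply node `i` is at distance more than `3 * R`
from `j`. On this event moving supply node `i` from displacement `ρ • u` to displacement `τ • u`
from `j` changes its nearest augmenting demand node from `j` to `j'`. -/
def isolatedPair (i : Fin s) (j j' : Fin m) (u : Point k) (ρ τ R : ℝ) : Set (Config k s m) :=
  {p | p.2 j ∈ cube k (1 / 4) (3 / 4) ∧ p.2 j' ∈ lens (p.2 j) u ρ τ ∧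
    (∀ j'', j'' ≠ j → j'' ≠ j' → p.2 j'' ∉ closedBall (p.2 j) (3 * R)) ∧
    ∀ i', i' ≠ i → p.1 i' ∉ closedBall (p.2 j) (3 * R)}

variable {i : Fin s} {j j' : Fin m} {u : Point k} {ρ τ R : ℝ} {p : Config k s m}

lemma measurableSet_isolatedPair (i : Fin s) (j j' : Fin m) (u : Point k) (ρ τ R : ℝ) :
    MeasurableSet (isolatedPair i j j' u ρ τ R) := by
  simp only [isolatedPair, Set.ofPred_and, Set.ofPred_forall, lens, Set.mem_sdiff, mem_ball,
    mem_closedBall, not_le]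
  refine .inter (measurableSet_cube k _ _ |>.preimage (by fun_prop)) (.inter (.inter ?_ ?_)
    (.inter (.iInter fun j'' => .iInter fun _ => .iInter fun _ => ?_)
      (.iInter fun i' => .iInter fun _ => ?_))) <;>
  exact measurableSet_lt (by fun_prop) (by fun_prop)

lemma eq_of_mem_isolatedPair {j₁ j₂ : Fin m} (hu : ‖u‖ = 1) (hτ : 0 ≤ τ) (hτR : τ ≤ R)
    (hj₂ : j₂ ≠ j) (h₁ : p ∈ isolatedPair i j j₁ u ρ τ R) (h₂ : p ∈ isolatedPair i j j₂ u ρ τ R) :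
    j₁ = j₂ := by
  by_contra hne
  refine h₁.2.2.1 j₂ hj₂ (Ne.symm hne) (mem_closedBall.2 ?_)
  linarith [dist_lt_two_mul_of_mem_lens hu hτ h₂.2.1]

lemma pi_prod_pi_subset_isolatedPair_slice (i : Fin s) (hj : j' ≠ j) {x : Point k}
    (hx : x ∈ cube k (1 / 4) (3 / 4)) :
    Set.univ.pi (update (fun _ => (closedBall x (3 * R))ᶜ) i Set.univ) ×ˢ
        Set.univ.pi
          (update (update (fun _ => (closedBall x (3 * R))ᶜ) j Set.univ) j' (lens x u ρ τ)) ⊆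
      {p : Config k s m | (p.1, update p.2 j x) ∈ isolatedPair i j j' u ρ τ R} := by
  rintro p ⟨hS, hD⟩
  simp only [isolatedPair, Set.mem_ofPred_eq, update_self, update_of_ne hj]
  refine ⟨hx, by simpa only [update_self] using hD j' trivial, fun j'' h h' => ?_, fun i' h => ?_⟩
  · simpa only [update_of_ne h, update_of_ne h', Set.mem_compl_iff] using hD j'' trivial
  · simpa only [update_of_ne h, Set.mem_compl_iff] using hS i' trivial

lemma one_sub_pow_mul_le_measureReal_isolatedPair_slice [NeZero k] (i : Fin s) (hj : j' ≠ j)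
    (hu : ‖u‖ = 1) (hρ : 0 ≤ ρ) (hτ : 0 ≤ τ) (hτR : τ ≤ R) (hR : 3 * R ≤ 1 / 4)
    (hsmall : (3 * R) ^ k * unitBallVolume k ≤ 1) {x : Point k}
    (hx : x ∈ cube k (1 / 4) (3 / 4)) :
    (1 - (3 * R) ^ k * unitBallVolume k) ^ (s + m) * ((τ ^ k - ρ ^ k) * unitBallVolume k) ≤
      (configLaw k s m).real {p | (p.1, update p.2 j x) ∈ isolatedPair i j j' u ρ τ R} := by
  set δ := 1 - (3 * R) ^ k * unitBallVolume k
  have hR₀ : 0 ≤ 3 * R := by linarith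
  have hδ₀ : 0 ≤ δ := sub_nonneg.2 hsmall
  have hδ₁ : δ ≤ 1 := sub_le_self _ (mul_nonneg (pow_nonneg hR₀ k) (unitBallVolume_pos k).le)
  let far : Set (Point k) := (closedBall x (3 * R))ᶜ
  let supplies : Fin s → Set (Point k) := update (fun _ => far) i Set.univ
  let demands : Fin m → Set (Point k) := update (update (fun _ => far) j Set.univ) j' (lens x u ρ τ)
  have hfar : δ ≤ (unifCube k).real far := one_sub_le_unifCube_compl_closedBall x hR₀
  have hsupplies := measureReal_mul_pow_card_le_pi (μ := unifCube k) (t := supplies) hδ₀ hδ₁ i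
    fun i' hi' => by
    simpa only [supplies, update_of_ne hi'] using hfar
  have hdemands := measureReal_mul_pow_card_le_pi (μ := unifCube k) (t := demands) hδ₀ hδ₁ j'
    fun j'' hj'' => by
      by_cases h : j'' = j
      · simpa only [demands, h, update_of_ne hj.symm, update_self, probReal_univ] using hδ₁
      · simpa only [demands, update_of_ne hj'', update_of_ne h] using hfar
  simp only [supplies, demands, update_self, probReal_univ, one_mul, Fintype.card_fin]
    at hsupplies hdemands
  have hlens := sub_mul_le_unifCube_lens hu hρ hτ (by linarith) hx
  calc δ ^ (s + m) * ((τ ^ k - ρ ^ k) * unitBallVolume k)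
      = δ ^ s * ((τ ^ k - ρ ^ k) * unitBallVolume k * δ ^ m) := by ring
    _ ≤ δ ^ s * ((unifCube k).real (lens x u ρ τ) * δ ^ m) := by gcongr
    _ ≤ _ := mul_le_mul hsupplies hdemands (by positivity) measureReal_nonneg
    _ = (configLaw k s m).real (Set.univ.pi supplies ×ˢ Set.univ.pi demands) :=
        (measureReal_prod_prod _ _).symm
    _ ≤ _ := measureReal_mono (pi_prod_pi_subset_isolatedPair_slice i hj hx)

lemma one_sub_pow_mul_le_measureReal_isolatedPair [NeZero k] (i : Fin s) (hj : j' ≠ j)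
    (hu : ‖u‖ = 1) (hρ : 0 ≤ ρ) (hτ : 0 ≤ τ) (hτR : τ ≤ R) (hR : 3 * R ≤ 1 / 4)
    (hsmall : (3 * R) ^ k * unitBallVolume k ≤ 1) :
    (1 - (3 * R) ^ k * unitBallVolume k) ^ (s + m) * ((τ ^ k - ρ ^ k) * unitBallVolume k) *
      (1 / 2) ^ k ≤ (configLaw k s m).real (isolatedPair i j j' u ρ τ R) := by
  have hresample := measurePreserving_update_demand (k := k) (s := s) j
  have hmeas := measurableSet_isolatedPair i j j' u ρ τ R
  have hcentre : (unifCube k).real (cube k (1 / 4) (3 / 4)) = (1 / 2) ^ k := by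
    rw [unifCube_real_cube (by norm_num) (by norm_num) (by norm_num)]
    norm_num
  rw [← hresample.measureReal_preimage hmeas.nullMeasurableSet, ← hcentre]
  exact mul_measureReal_le_measureReal_prod (hresample.measurable hmeas) (measurableSet_cube k _ _)
    fun x hx => one_sub_pow_mul_le_measureReal_isolatedPair_slice i hj hu hρ hτ hτR hR hsmall hx

end IsolatedPair

/-! ### Radial decay of the augmenting density -/

section Decay

open Metric

variable {k s m n : ℕ} {r : Fin s → ℝ} {i : Fin s} {j j' : Fin m} {x u : Point k} {ρ τ R : ℝ}
  {p : Config k s m}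

lemma mem_augmenting_of_supply_notMem_closedBall
    (hr : ∀ i' ≠ i, (r i' / n) ^ ((1 : ℝ) / k) ≤ R)
    (hfar : ∀ i' ≠ i, p.1 i' ∉ closedBall x (3 * R)) (hj : dist (p.2 j) x ≤ 2 * R) :
    j ∈ augmenting (adjOf k n p.1 r p.2) i := by
  refine mem_augmenting_of_isolated fun i' hi' hadj => hfar i' hi' (mem_closedBall.2 ?_)
  linarith [dist_triangle (p.1 i') (p.2 j) x, hr i' hi', (show dist (p.1 i') (p.2 j) ≤ _ from hadj)]

lemma smul_mem_nearestCell_of_mem_isolatedPair (hr : ∀ i' ≠ i, (r i' / n) ^ ((1 : ℝ) / k) ≤ R)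
    (hu : ‖u‖ = 1) (hρ : 0 ≤ ρ) (hρR : ρ ≤ R) (hR : 3 * R ≤ 1 / 4)
    (h : p ∈ isolatedPair i j j' u ρ τ R) :
    ρ • u ∈ nearestCell (cube k 0 1) p.2 (augmenting (adjOf k n p.1 r p.2) i) j := by
  obtain ⟨hcentre, hlens, hdemand, hsupply⟩ := h
  have hself := dist_add_smul_self hu hρ (p.2 j)
  have hnorm : ‖ρ • u‖ = ρ := (dist_self_add_left _ _).symm.trans hself
  have hlt (j'' : Fin m) (hne : j'' ≠ j) : ρ < dist (p.2 j + ρ • u) (p.2 j'') := by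
    by_cases hj'' : j'' = j'
    · subst hj''
      rw [dist_comm]
      exact not_le.1 hlens.2
    · have hfar := not_le.1 (mem_closedBall.not.1 (hdemand j'' hne hj''))
      linarith [dist_triangle_left (p.2 j'') (p.2 j) (p.2 j + ρ • u)]
  refine ⟨add_mem_cube hcentre (by linarith) (by linarith),
    mem_augmenting_of_supply_notMem_closedBall hr hsupply (by rw [dist_self]; linarith),
    fun j'' _ => ?_⟩
  by_cases hne : j'' = j
  · rw [hne]
  · exact (Prod.Lex.toLex_lt_toLex.2 (.inl (hself.trans_lt (hlt j'' hne)))).le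

lemma smul_notMem_nearestCell_of_mem_isolatedPair
    (hr : ∀ i' ≠ i, (r i' / n) ^ ((1 : ℝ) / k) ≤ R) (hu : ‖u‖ = 1) (hτ : 0 ≤ τ) (hτR : τ ≤ R)
    (h : p ∈ isolatedPair i j j' u ρ τ R) :
    τ • u ∉ nearestCell (cube k 0 1) p.2 (augmenting (adjOf k n p.1 r p.2) i) j := by
  obtain ⟨-, hlens, -, hsupply⟩ := h
  intro hcell
  have hj' : j' ∈ augmenting (adjOf k n p.1 r p.2) i :=
    mem_augmenting_of_supply_notMem_closedBall hr hsupply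
      (by linarith [dist_lt_two_mul_of_mem_lens hu hτ hlens])
  have hle := hcell.2.dist_le hj'
  rw [dist_add_smul_self hu hτ, dist_comm] at hle
  exact hle.not_gt hlens.1

lemma indicator_nearestCell_add_sum_isolatedPair_le
    (hr : ∀ i' ≠ i, (r i' / n) ^ ((1 : ℝ) / k) ≤ R) (hu : ‖u‖ = 1) (hρ : 0 ≤ ρ) (hρτ : ρ ≤ τ)
    (hτR : τ ≤ R) (hR : 3 * R ≤ 1 / 4) (hj : p.2 j ∈ cube k 0 1) :
    (nearestCell (cube k 0 1) p.2 (augmenting (adjOf k n p.1 r p.2) i) j).indicator 1 (τ • u) +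
        ∑ j' ∈ Finset.univ.erase j, (isolatedPair i j j' u ρ τ R).indicator 1 p ≤
      (nearestCell (cube k 0 1) p.2 (augmenting (adjOf k n p.1 r p.2) i) j).indicator
        (1 : Point k → ℝ) (ρ • u) := by
  have hτ := hρ.trans hρτ
  by_cases hpair : ∃ j' ≠ j, p ∈ isolatedPair i j j' u ρ τ R
  · obtain ⟨j', hne, hp⟩ := hpair
    rw [Set.indicator_of_notMem (smul_notMem_nearestCell_of_mem_isolatedPair hr hu hτ hτR hp),
      Set.indicator_of_mem
        (smul_mem_nearestCell_of_mem_isolatedPair hr hu hρ (hρτ.trans hτR) hR hp),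
      Finset.sum_eq_single_of_mem j' (Finset.mem_erase.2 ⟨hne, Finset.mem_univ j'⟩)
        fun j'' _ hj'' => Set.indicator_of_notMem
          (fun hp' => hj'' (eq_of_mem_isolatedPair hu hτ hτR hne hp' hp)) _,
      Set.indicator_of_mem hp]
    simp only [Pi.one_apply, zero_add, le_refl]
  · push Not at hpair
    rw [Finset.sum_eq_zero fun j' hj' =>
      Set.indicator_of_notMem (hpair j' (Finset.ne_of_mem_erase hj')) _, add_zero]
    refine Set.indicator_apply_le' (fun hcell => ?_) fun _ => Set.indicator_nonneg (by simp) _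
    rw [Set.indicator_of_mem
      (smul_mem_nearestCell_of_le (convex_cube k 0 1) hj hρ hρτ hcell)]
    rfl

lemma augmentingDensity_add_sum_isolatedPair_le (hr : ∀ i' ≠ i, (r i' / n) ^ ((1 : ℝ) / k) ≤ R)
    (hu : ‖u‖ = 1) (hρ : 0 ≤ ρ) (hρτ : ρ ≤ τ) (hτR : τ ≤ R) (hR : 3 * R ≤ 1 / 4) :
    augmentingDensity k n m r i (τ • u) + ∑ j, ∑ j' ∈ Finset.univ.erase j,
        (configLaw k s m).real (isolatedPair i j j' u ρ τ R) ≤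
      augmentingDensity k n m r i (ρ • u) := by
  have hmeas (j j' : Fin m) := measurableSet_isolatedPair i j j' u ρ τ R
  have hInt (j j' : Fin m) : Integrable
      ((isolatedPair i j j' u ρ τ R).indicator (1 : Config k s m → ℝ)) (configLaw k s m) :=
    (integrable_const 1).indicator (hmeas j j')
  have hsum (j : Fin m) : Integrable (fun p => ∑ j' ∈ Finset.univ.erase j,
      (isolatedPair i j j' u ρ τ R).indicator (1 : Config k s m → ℝ) p) (configLaw k s m) :=
    integrable_finsetSum _ fun j' _ => hInt j j'
  simp only [← integral_indicator_one (hmeas _ _)]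
  simp only [← integral_finsetSum _ fun j' _ => hInt _ j']
  rw [← integral_finsetSum _ fun j _ => hsum j, augmentingDensity, ← integral_add
    (integrable_augmentingCount n r i _) (integrable_finsetSum _ fun j _ => hsum j)]
  refine integral_mono_ae ((integrable_augmentingCount n r i _).add
    (integrable_finsetSum _ fun j _ => hsum j)) (integrable_augmentingCount n r i _) ?_
  filter_upwards [ae_demand_mem_cube k s m] with p hp
  simp only [augmentingCount, nearestCellCount, ← Finset.sum_add_distrib]
  exact Finset.sum_le_sum fun j _ =>
    indicator_nearestCell_add_sum_isolatedPair_le hr hu hρ hρτ hτR hR (hp j)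

lemma decreasesRadially_augmentingDensity [NeZero k]
    (hr : ∀ i' ≠ i, (r i' / n) ^ ((1 : ℝ) / k) ≤ R) (hR : 3 * R ≤ 1 / 4)
    (hsmall : (3 * R) ^ k * unitBallVolume k ≤ 1) :
    DecreasesRadially (augmentingDensity k n m r i)
      (m * (m - 1) *
        ((1 - (3 * R) ^ k * unitBallVolume k) ^ (s + m) * unitBallVolume k * (1 / 2) ^ k)) R := by
  intro u hu ρ hρ τ hτ hρτ
  set p := (1 - (3 * R) ^ k * unitBallVolume k) ^ (s + m) * unitBallVolume k * (1 / 2) ^ k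
  have hpair (j : Fin m) : (m - 1) * (p * (τ ^ k - ρ ^ k)) ≤ ∑ j' ∈ Finset.univ.erase j,
      (configLaw k s m).real (isolatedPair i j j' u ρ τ R) := by
    calc (m - 1) * (p * (τ ^ k - ρ ^ k))
        = ∑ _j' ∈ Finset.univ.erase j, p * (τ ^ k - ρ ^ k) := by
          rw [Finset.sum_erase_eq_sub (Finset.mem_univ j), Finset.sum_const, Finset.card_univ,
            Fintype.card_fin, nsmul_eq_mul]
          ring
      _ ≤ _ := Finset.sum_le_sum fun j' hj' => by
          refine le_trans (le_of_eq ?_) (one_sub_pow_mul_le_measureReal_isolatedPair i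
            (Finset.ne_of_mem_erase hj') hu hρ.1 hτ.1 hτ.2 hR hsmall)
          ring
  have hdrop := augmentingDensity_add_sum_isolatedPair_le (m := m) hr hu hρ.1 hρτ hτ.2 hR
  have htotal := Finset.sum_le_sum fun j (_ : j ∈ Finset.univ) => hpair j
  rw [Finset.sum_const, Finset.card_univ, Fintype.card_fin, nsmul_eq_mul] at htotal
  simp only [finrank_euclideanSpace_fin]
  linarith

end Decay

/-! ### Dependence of the expected matching size on one range -/

section OneRange

open Metric

variable {k s m : ℕ}

lemma rpow_div_natCast_mem_Icc (k n : ℕ) {a M : ℝ} (ha : a ∈ Set.Icc 0 M) :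
    (a / n) ^ ((1 : ℝ) / k) ∈ Set.Icc 0 ((M / n) ^ ((1 : ℝ) / k)) := by
  have ha_nonneg : 0 ≤ a / n := div_nonneg ha.1 n.cast_nonneg
  refine ⟨Real.rpow_nonneg ha_nonneg _, ?_⟩
  gcongr
  exact ha.2

variable [NeZero k]

lemma rpow_one_div_natCast_pow {x : ℝ} (hx : 0 ≤ x) : (x ^ ((1 : ℝ) / k)) ^ k = x := by
  rw [one_div, Real.rpow_inv_natCast_pow hx (NeZero.ne k)]

lemma coordLipschitzOn_muU (n : ℕ) (M : ℝ) :
    CoordLipschitzOn (muU k n m (a := s)) (m / n * unitBallVolume k) (Set.Icc 0 M) := by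
  intro r hr i a ha
  have hball := abs_setIntegral_closedBall_sub_le volume
    (measurable_augmentingDensity (k := k) (m := m) n r i) (abs_augmentingDensity_le n r i)
    (rpow_div_natCast_mem_Icc k n (hr i)).1 (rpow_div_natCast_mem_Icc k n ha).1
  rw [finrank_euclideanSpace_fin, rpow_one_div_natCast_pow (div_nonneg (hr i).1 n.cast_nonneg),
    rpow_one_div_natCast_pow (div_nonneg ha.1 n.cast_nonneg), ← sub_div, abs_div,
    Nat.abs_cast] at hball
  calc |muU k n m (update r i a) - muU k n m r|
      = |muU k n m (update r i a) - muU k n m (update r i (r i))| := by rw [update_eq_self]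
    _ ≤ m * volume.real (ball (0 : Point k) 1) * (|a - r i| / n) := by
        rwa [muU_update, muU_update, add_sub_add_left_eq_sub]
    _ = m / n * unitBallVolume k * |a - r i| := by
        rw [unitBallVolume]
        ring

lemma hasStrongSupergradientOn_muU_update {n : ℕ} [NeZero n] {r : Fin s → ℝ} {i : Fin s}
    {c M : ℝ} (hdec : DecreasesRadially (augmentingDensity k n m r i) (c * n ^ 2)
      ((M / n) ^ ((1 : ℝ) / k))) :
    HasStrongSupergradientOn (fun v => muU k n m (update r i v))
      (fun a => (∫ w in closedBall 0 1,
        atRadius (augmentingDensity k n m r i) ((a / n) ^ ((1 : ℝ) / k)) w) / n)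
      (c * unitBallVolume k / 2) (Set.Icc 0 M) := by
  intro a ha b hb
  have hn : (n : ℝ) ≠ 0 := NeZero.ne _
  have hball := integral_closedBall_le_of_decreasesRadially volume
    (measurable_augmentingDensity n r i) (abs_augmentingDensity_le n r i) hdec
    (rpow_div_natCast_mem_Icc k n ha) (rpow_div_natCast_mem_Icc k n hb)
  rw [finrank_euclideanSpace_fin, rpow_one_div_natCast_pow (div_nonneg ha.1 n.cast_nonneg),
    rpow_one_div_natCast_pow (div_nonneg hb.1 n.cast_nonneg), ← sub_div] at hball
  have hcurv : c * n ^ 2 * volume.real (ball (0 : Point k) 1) / 2 * ((b - a) / n) ^ 2 =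
      c * unitBallVolume k / 2 * (b - a) ^ 2 := by
    rw [unitBallVolume]
    field_simp
  rw [hcurv] at hball
  simp only [muU_update]
  rw [div_mul_eq_mul_div, ← mul_div_assoc] at *
  linarith

end OneRange

/-! ### Uniformity principle -/

section Uniformity

variable {k n m : ℕ} {β M : ℝ}

lemma rpow_neg_one_div_four_le (n k : ℕ) :
    (n : ℝ) ^ (-(1 : ℝ) / 4) ≤ (n : ℝ) ^ (-(1 : ℝ) / (4 * ((k : ℝ) + 1))) := by
  rcases n.eq_zero_or_pos with rfl | hn
  · rw [Nat.cast_zero, Real.zero_rpow (by norm_num), Real.zero_rpow (by positivity)]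
  · refine Real.rpow_le_rpow_of_exponent_le (Nat.one_le_cast.2 hn) ?_
    rw [neg_div, neg_div, neg_le_neg_iff]
    gcongr
    linarith [k.cast_nonneg (α := ℝ)]

lemma exp_neg_two_mul_mul_le_one_sub_pow {x : ℝ} (hx₀ : 0 ≤ x) (hx₁ : x ≤ 1 / 2) (N : ℕ) :
    Real.exp (-(2 * (x * N))) ≤ (1 - x) ^ N := by
  have hexp : Real.exp (-(2 * x)) ≤ 1 - x := by
    rw [Real.exp_neg]
    calc (Real.exp (2 * x))⁻¹ ≤ (2 * x + 1)⁻¹ := by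
          gcongr
          exact Real.add_one_le_exp _
      _ ≤ 1 - x := by
          rw [inv_le_iff_one_le_mul₀ (by linarith)]
          nlinarith
  calc Real.exp (-(2 * (x * N))) = Real.exp (-(2 * x)) ^ N := by
        rw [← Real.exp_nat_mul]
        ring_nf
    _ ≤ (1 - x) ^ N := pow_le_pow_left₀ (Real.exp_nonneg _) hexp N

/-- The rate, in units of `n ^ 2`, at which the density of an augmenting demand node decreases
with the volume parameter: about `(β * n) ^ 2 / 2` pairs of demand nodes, each of which lies in the
central cube, with the rest of the nodes out of the way, with the stated probability. -/
def decayRate (k : ℕ) (β M : ℝ) : ℝ :=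
  β ^ 2 / 2 *
    (Real.exp (-(2 * (3 ^ k * M * unitBallVolume k * (1 + β)))) * unitBallVolume k * (1 / 2) ^ k)

lemma decayRate_pos (hβ : 0 < β) : 0 < decayRate k β M := by
  have := unitBallVolume_pos k
  unfold decayRate
  positivity

lemma decayRate_mul_sq_le [NeZero n] (hM : 0 ≤ M) (hm : (m : ℝ) = β * n) (hm₂ : 2 ≤ m)
    (hvol : 2 * (3 ^ k * M * unitBallVolume k) ≤ n) :
    decayRate k β M * n ^ 2 ≤ m * (m - 1) *
      ((1 - 3 ^ k * M * unitBallVolume k / n) ^ (n + m) * unitBallVolume k * (1 / 2) ^ k) := by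
  have hn : (0 : ℝ) < n := Nat.cast_pos.2 (NeZero.pos n)
  have hω := unitBallVolume_pos k
  set v := 3 ^ k * M * unitBallVolume k
  have hempty : Real.exp (-(2 * (v * (1 + β)))) ≤ (1 - v / n) ^ (n + m) := by
    have hexponent : v / n * ↑(n + m) = v * (1 + β) := by
      rw [Nat.cast_add, hm]
      field_simp
    rw [← hexponent]
    refine exp_neg_two_mul_mul_le_one_sub_pow (by positivity) ?_ (n + m)
    rw [div_le_iff₀ hn]
    linarith
  have hpairs : β ^ 2 / 2 * n ^ 2 ≤ m * (m - 1) := by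
    have hm_two : (2 : ℝ) ≤ m := mod_cast hm₂
    calc β ^ 2 / 2 * n ^ 2 = m * (m / 2) := by rw [hm]; ring
      _ ≤ m * (m - 1) := by gcongr; linarith
  calc decayRate k β M * n ^ 2
      = β ^ 2 / 2 * n ^ 2 *
          (Real.exp (-(2 * (v * (1 + β)))) * unitBallVolume k * (1 / 2) ^ k) := by
        unfold decayRate
        ring
    _ ≤ _ := by
        gcongr
        exact (by positivity : 0 ≤ β ^ 2 / 2 * (n : ℝ) ^ 2).trans hpairs

lemma mul_sqrt_lt_of_sqrt_div_mul_rpow_lt {x a c θ : ℝ} (hx : 0 < x) (ha : 0 < a) (hc : 0 < c)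
    (hθ : √(a / c) * x ^ (-(1 : ℝ) / 4) < θ) : a * √x < x * (c * θ ^ 2) := by
  have hsq : a / c * (x ^ (-(1 : ℝ) / 4)) ^ 2 < θ ^ 2 := by
    rw [← Real.sq_sqrt (show 0 ≤ a / c by positivity), ← mul_pow]
    exact pow_lt_pow_left₀ hθ (by positivity) two_ne_zero
  have hsqrt : √x = x * (x ^ (-(1 : ℝ) / 4)) ^ 2 := by
    rw [← Real.rpow_natCast, ← Real.rpow_mul hx.le, Real.sqrt_eq_rpow, ← Real.rpow_one_add' hx.le]
    all_goals norm_num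
  calc a * √x = x * (c * (a / c * (x ^ (-(1 : ℝ) / 4)) ^ 2)) := by
        rw [hsqrt]
        field_simp
    _ < x * (c * θ ^ 2) := by gcongr

variable [NeZero k]

lemma decreasesRadially_augmentingDensity_decayRate [NeZero n] (hM : 0 ≤ M)
    (hm : (m : ℝ) = β * n) (hm₂ : 2 ≤ m) (hball : M * 12 ^ k ≤ n)
    (hvol : 2 * (3 ^ k * M * unitBallVolume k) ≤ n) {r : Fin n → ℝ}
    (hr : ∀ i, r i ∈ Set.Icc 0 M) (i : Fin n) :
    DecreasesRadially (augmentingDensity k n m r i) (decayRate k β M * n ^ 2)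
      ((M / n) ^ ((1 : ℝ) / k)) := by
  have hn : (0 : ℝ) < n := Nat.cast_pos.2 (NeZero.pos n)
  set R := (M / n) ^ ((1 : ℝ) / k)
  have hR_pow : R ^ k = M / n := rpow_one_div_natCast_pow (by positivity)
  have hR : R ≤ 1 / 12 := by
    refine le_of_pow_le_pow_left₀ (NeZero.ne k) (by norm_num) ?_
    rwa [hR_pow, div_pow, one_pow, div_le_div_iff₀ hn (by positivity), one_mul]
  have hδ : (3 * R) ^ k * unitBallVolume k = 3 ^ k * M * unitBallVolume k / n := by
    rw [mul_pow, hR_pow]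
    ring
  have hδ_le : (3 * R) ^ k * unitBallVolume k ≤ 1 := by
    rw [hδ, div_le_one hn]
    linarith
  refine (decreasesRadially_augmentingDensity (R := R)
    (fun i' _ => (rpow_div_natCast_mem_Icc k n (hr i')).2) (by linarith) hδ_le).of_le ?_
  rw [hδ]
  exact decayRate_mul_sq_le hM hm hm₂ hvol

lemma mul_decayRate_sub_le_muU_sub [NeZero n] (hβ : 0 < β) (hM : 0 ≤ M) (hm : (m : ℝ) = β * n)
    (hm₂ : 2 ≤ m) (hball : M * 12 ^ k ≤ n) (hvol : 2 * (3 ^ k * M * unitBallVolume k) ≤ n)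
    {r r' : Fin n → ℝ} (hr : ∀ i, r i ∈ Set.Icc 0 M) (hr' : ∀ i, r' i ∈ Set.Icc 0 M)
    (hmaj : Majorizes r r') {θ : ℝ} (hθ : 0 ≤ θ)
    (hgap : θ * n ≤ ∑ i, |descSort r i - descSort r' i|) :
    n * (decayRate k β M * unitBallVolume k / 2 * θ ^ 2) -
      2 * (β * unitBallVolume k * (M * √n)) ≤ muU k n m r' - muU k n m r := by
  have hn : (0 : ℝ) < n := Nat.cast_pos.2 (NeZero.pos n)
  have hω := unitBallVolume_pos k
  have hrate := decayRate_pos (k := k) (M := M) hβ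
  have hmn : (m : ℝ) / n = β := by rw [hm, mul_div_cancel_right₀ _ hn.ne']
  have hgap' : θ ≤ 𝔼 i, |descSort r i - descSort r' i| := by
    rwa [Fintype.expect_eq_sum_div_card, Fintype.card_fin, le_div_iff₀ hn]
  refine mul_sub_le_sub_of_majorizes (by positivity) hM (by positivity) hθ
    (fun x σ => muU_comp_perm n x σ) (hmn ▸ coordLipschitzOn_muU n M) (fun x hx i => ?_)
    hr hr' hmaj hgap'
  exact ⟨_, hasStrongSupergradientOn_muU_update
    (decreasesRadially_augmentingDensity_decayRate hM hm hm₂ hball hvol hx i)⟩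

theorem uniformity_principle_high_dim_general (hβ : 0 < β) (hM : 0 < M) :
    ∃ C : ℝ, 0 < C ∧ ∃ N : ℕ, ∀ n : ℕ, N ≤ n → ∀ m : ℕ, (m : ℝ) = β * n →
      ∀ r r' : Fin n → ℝ,
        (∀ i, r i ∈ Set.Icc (0 : ℝ) M) → (∀ i, r' i ∈ Set.Icc (0 : ℝ) M) →
        Majorizes r r' →
        ∀ θ : ℝ, C * (n : ℝ) ^ (-(1 : ℝ) / 4) < θ →
          θ * n ≤ ∑ i, |descSort r i - descSort r' i| →
          muU k n m r < muU k n m r' := by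
  have hω := unitBallVolume_pos k
  set L := 2 * (β * unitBallVolume k * M)
  set c := decayRate k β M * unitBallVolume k / 2
  have hL : 0 < L := by positivity
  have hc : 0 < c := by
    have := decayRate_pos (k := k) (M := M) hβ
    positivity
  refine ⟨√(L / c), by positivity, max 1
    ⌈max (M * 12 ^ k) (max (2 * (3 ^ k * M * unitBallVolume k)) (2 / β))⌉₊, ?_⟩
  intro n hN m hm r r' hr hr' hmaj θ hθ hgap
  simp only [max_le_iff, Nat.ceil_le] at hN
  obtain ⟨hn, hball, hvol, hβn⟩ := hN
  have : NeZero n := ⟨Nat.one_le_iff_ne_zero.1 hn⟩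
  have hn_pos : (0 : ℝ) < n := Nat.cast_pos.2 hn
  have hm₂ : 2 ≤ m := by
    rw [div_le_iff₀' hβ, ← hm] at hβn
    exact_mod_cast hβn
  have hgain : n * (c * θ ^ 2) - L * √n ≤ muU k n m r' - muU k n m r := by
    rw [show L * √n = 2 * (β * unitBallVolume k * (M * √n)) by ring]
    exact mul_decayRate_sub_le_muU_sub hβ hM.le hm hm₂ hball hvol hr hr' hmaj
      ((by positivity : 0 ≤ √(L / c) * (n : ℝ) ^ (-(1 : ℝ) / 4)).trans hθ.le) hgap
  linarith [mul_sqrt_lt_of_sqrt_div_mul_rpow_lt hn_pos hL hc hθ]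

end Uniformity

/-- **Uniformity principle in dimension `k ≥ 2`.**
Fix a dimension `k ≥ 2`, a demand-to-supply ratio `β > 0`, and a constant
`M ≥ max {1, 1/β}`. There exist a constant `C > 0` (depending only on `β`, `M`, `k`)
and an integer `N` such that for all `n ≥ N` with `m = βn`, and for all service-range
vectors `r, r' ∈ [0,M]^n` with `r ⪰ r'` and `‖r^↓ - r'^↓‖₁ > θ n` for some
`θ > C n^{-1/(4(k+1))}`, the expected maximum matching sizes satisfy `μ_m(r') > μ_m(r)`. -/
theorem uniformity_principle_high_dim (k : ℕ) (hk : 2 ≤ k)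
    (β M : ℝ) (hβ : 0 < β) (hM : max 1 β⁻¹ ≤ M) :
    ∃ C : ℝ, 0 < C ∧ ∃ N : ℕ, ∀ n : ℕ, N ≤ n → ∀ m : ℕ, (m : ℝ) = β * n →
      ∀ r r' : Fin n → ℝ,
        (∀ i, r i ∈ Set.Icc (0 : ℝ) M) → (∀ i, r' i ∈ Set.Icc (0 : ℝ) M) →
        Majorizes r r' →
        ∀ θ : ℝ, C * (n : ℝ) ^ (-(1 : ℝ) / (4 * ((k : ℝ) + 1))) < θ →
          θ * n < ∑ i, |descSort r i - descSort r' i| →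
          muU k n m r < muU k n m r' := by
  have : NeZero k := ⟨by omega⟩
  obtain ⟨C, hC, N, h⟩ := uniformity_principle_high_dim_general (k := k) hβ
    (one_pos.trans_le ((le_max_left 1 β⁻¹).trans hM))
  exact ⟨C, hC, N, fun n hn m hm r r' hr hr' hmaj θ hθ hgap => h n hn m hm r r' hr hr' hmaj θ
    ((mul_le_mul_of_nonneg_left (rpow_neg_one_div_four_le n k) hC.le).trans_lt hθ) hgap.le⟩

end
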